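/- arXiv:1806.10049 — 8 statements merged into one kernel-verified Lean document; each statement's English description precedes it below -/
import Mathlib

section
/- Let X be a real Banach space having property (D) and let Y ⊆ X be a closed linear subspace. Then Y has property (D). That is, for every total set Γ ⊆ Y* of continuous linear functionals on Y, the σ-algebra σ(Γ) on Y generated by Γ coincides with the σ-algebra σ(Y*) generated by all of Y*. -/
open MeasureTheory

/-- The smallest σ-algebra on `E` making every functional in `Γ` measurable. -/
def sigmaGen (E : Type*) [NormedAddCommGroup E] [NormedSpace ℝ E]
    (Γ : Set (E →L[ℝ] ℝ)) : MeasurableSpace E :=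
  ⨆ φ ∈ Γ, MeasurableSpace.comap (fun x => φ x) Real.measurableSpace

/-- A set of continuous linear functionals is total if it separates the points of `E`. -/
def IsTotalSet (E : Type*) [NormedAddCommGroup E] [NormedSpace ℝ E]
    (Γ : Set (E →L[ℝ] ℝ)) : Prop :=
  ∀ x : E, x ≠ 0 → ∃ φ ∈ Γ, φ x ≠ 0

/-- Gulisashvili's property (D): for every total set of functionals `Γ`, the σ-algebra
generated by `Γ` coincides with the σ-algebra generated by all of the dual. -/
def HasPropertyD (E : Type*) [NormedAddCommGroup E] [NormedSpace ℝ E] : Prop :=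
  ∀ Γ : Set (E →L[ℝ] ℝ), IsTotalSet E Γ → sigmaGen E Γ = sigmaGen E Set.univ

/-- If a Banach space `X` has property (D), then every closed subspace `Y ⊆ X`
has property (D). -/
theorem subspace_hasPropertyD {X : Type*} [NormedAddCommGroup X] [NormedSpace ℝ X]
    [CompleteSpace X] (hX : HasPropertyD X)
    (Y : Submodule ℝ X) (hY : IsClosed (Y : Set X)) :
    HasPropertyD Y := by
  intro Γ hΓ
  have key : IsTotalSet X {φ | φ.comp Y.subtypeL ∈ Γ ∨ φ.comp Y.subtypeL = 0} := by
    intro x hx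
    by_cases hxY : x ∈ Y
    · obtain ⟨ψ, hψ, hne⟩ := hΓ ⟨x, hxY⟩ (by simpa [Subtype.ext_iff] using hx)
      obtain ⟨φ, hφ, -⟩ := exists_extension_norm_eq Y ψ
      have hc : φ.comp Y.subtypeL = ψ := by
        ext y
        exact hφ y
      refine ⟨φ, Or.inl (by rw [hc]; exact hψ), ?_⟩
      have := hφ ⟨x, hxY⟩
      simp only at this
      rw [this]
      exact hne
    · obtain ⟨f, u, hfu, hux⟩ := geometric_hahn_banach_closed_point Y.convex hY hxY
      have hz : ∀ a ∈ Y, f a = 0 := by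
        intro a ha
        by_contra hne
        have h := hfu _ (Y.smul_mem ((u + 1) / f a) ha)
        rw [map_smul, smul_eq_mul, div_mul_cancel₀ _ hne] at h
        linarith
      refine ⟨f, Or.inr ?_, ?_⟩
      · ext y
        exact hz y y.2
      · have h0 := hfu 0 Y.zero_mem
        rw [map_zero] at h0
        linarith
  have hD := hX _ key
  apply le_antisymm
  · exact biSup_mono (fun _ _ => Set.mem_univ _)
  · refine iSup₂_le fun ψ _ => ?_
    obtain ⟨φ, hφ, -⟩ := exists_extension_norm_eq Y ψ
    have h1 : MeasurableSpace.comap (fun y => ψ y) Real.measurableSpace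
        = MeasurableSpace.comap (fun y : Y => (y : X))
          (MeasurableSpace.comap (fun x => φ x) Real.measurableSpace) := by
      rw [MeasurableSpace.comap_comp]
      congr 1
      funext y
      exact (hφ y).symm
    rw [h1]
    have h2 : MeasurableSpace.comap (fun x => φ x) Real.measurableSpace
        ≤ sigmaGen X Set.univ :=
      le_iSup₂_of_le (f := fun (φ : X →L[ℝ] ℝ) (_ : φ ∈ (Set.univ : Set (X →L[ℝ] ℝ))) =>
        MeasurableSpace.comap (fun x => φ x) Real.measurableSpace) φ (Set.mem_univ _) le_rfl
    refine (MeasurableSpace.comap_mono h2).trans ?_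
    rw [← hD]
    simp only [sigmaGen, MeasurableSpace.comap_iSup, MeasurableSpace.comap_comp]
    refine iSup₂_le fun χ hχ => ?_
    rcases hχ with hχ | hχ
    · exact le_iSup₂_of_le (f := fun (φ : Y →L[ℝ] ℝ) (_ : φ ∈ Γ) =>
        MeasurableSpace.comap (fun x => φ x) Real.measurableSpace) _ hχ le_rfl
    · have h3 : ((fun x => χ x) ∘ fun y : Y => (y : X)) = fun _ => (0 : ℝ) := by
        funext y
        exact DFunLike.congr_fun hχ y
      rw [h3, MeasurableSpace.comap_const]
      exact bot_le
end

section
/- Let X be a real Banach space with property (D) and let {(x_i, x_i*) : i ∈ I} ⊆ X × X* be a Markushevich basis of X. Then for every x* ∈ X*, the set {i ∈ I : x*(x_i) ≠ 0} is countable (hence X is weakly Lindelöf determined). -/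
open MeasureTheory

/-- Sets in the generated σ-algebra depend on countably many functionals. -/
theorem exists_countable_determining (E : Type*) [NormedAddCommGroup E] [NormedSpace ℝ E]
    {I : Type*} (f : I → (E →L[ℝ] ℝ)) (A : Set E)
    (hA : MeasurableSet[sigmaGen E (Set.range f)] A) :
    ∃ C : Set I, C.Countable ∧ ∀ u v : E, (∀ i ∈ C, f i u = f i v) → (u ∈ A ↔ v ∈ A) := by
  let m : MeasurableSpace E :=
    { MeasurableSet' := fun A => ∃ C : Set I, C.Countable ∧
        ∀ u v : E, (∀ i ∈ C, f i u = f i v) → (u ∈ A ↔ v ∈ A)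
      measurableSet_empty := ⟨∅, Set.countable_empty, fun _ _ _ => Iff.rfl⟩
      measurableSet_compl := by
        rintro s ⟨C, hC, h⟩
        exact ⟨C, hC, fun u v huv => not_congr (h u v huv)⟩
      measurableSet_iUnion := by
        intro s hs
        choose C hC h using hs
        refine ⟨⋃ n, C n, Set.countable_iUnion hC, fun u v huv => ?_⟩
        simp only [Set.mem_iUnion]
        exact exists_congr fun n => h n u v fun i hi => huv i (Set.mem_iUnion.2 ⟨n, hi⟩) }
  have hle : sigmaGen E (Set.range f) ≤ m := by
    refine iSup₂_le ?_
    rintro _ ⟨i, rfl⟩ _ ⟨t, -, rfl⟩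
    refine ⟨{i}, Set.countable_singleton i, fun u v huv => ?_⟩
    simp only [Set.mem_preimage, huv i rfl]
  exact hle A hA

/-- If `X` is a Banach space with property (D) and `{(x_i, x_i*)}` is a Markushevich
basis of `X`, then for every `φ ∈ X*` the set `{i : φ (x i) ≠ 0}` is countable
(hence `X` is weakly Lindelöf determined). -/
theorem countable_support_of_markushevich_of_propertyD
    {X : Type*} [NormedAddCommGroup X] [NormedSpace ℝ X] [CompleteSpace X]
    (hX : HasPropertyD X)
    {I : Type*} (x : I → X) (x' : I → (X →L[ℝ] ℝ))
    (hbiorth : ∀ i j : I, (i = j → x' j (x i) = 1) ∧ (i ≠ j → x' j (x i) = 0))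
    (hspan : (Submodule.span ℝ (Set.range x)).topologicalClosure = ⊤)
    (htotal : IsTotalSet X (Set.range x'))
    (φ : X →L[ℝ] ℝ) :
    {i : I | φ (x i) ≠ 0}.Countable := by
  have hm : MeasurableSet[sigmaGen X (Set.range x')] ((fun y => φ y) ⁻¹' {0}) := by
    rw [hX _ htotal]
    have h : MeasurableSpace.comap (fun y => φ y) Real.measurableSpace ≤ sigmaGen X Set.univ :=
      le_iSup₂_of_le φ (Set.mem_univ φ) le_rfl
    exact h _ ⟨{0}, measurableSet_singleton 0, rfl⟩
  obtain ⟨C, hC, h⟩ := exists_countable_determining X x' _ hm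
  refine hC.mono fun i hi => ?_
  by_contra hiC
  apply hi
  refine (h (x i) 0 fun j hj => ?_).2 (by simp)
  rw [map_zero]
  exact (hbiorth i j).2 fun hij => hiC (hij ▸ hj)
end

section
/- Let X be a real Banach space having property (D) and let I be an uncountable set. Then there is no bounded linear operator T : ℓ¹(I) → X that is bounded below, i.e., there exist no T and constant c > 0 with ‖T(u)‖ ≥ c‖u‖ for all u ∈ ℓ¹(I). In other words, X contains no subspace isomorphic to ℓ¹(I) for uncountable I (equivalently, no copy of ℓ₁(ω₁)). -/
open MeasureTheory

/-- The σ-algebra of sets which cannot distinguish `0` from all but countably many `e i`. -/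
def coctbl {X I : Type*} (z : X) (e : I → X) : MeasurableSpace X where
  MeasurableSet' A := {i | ¬ (e i ∈ A ↔ z ∈ A)}.Countable
  measurableSet_empty := by simp
  measurableSet_compl A hA := by
    refine hA.mono fun i hi => ?_
    simp only [Set.mem_ofPred_eq, Set.mem_compl_iff] at hi ⊢
    tauto
  measurableSet_iUnion f hf := by
    refine (Set.countable_iUnion hf).mono fun i hi => ?_
    simp only [Set.mem_ofPred_eq, Set.mem_iUnion] at hi ⊢
    by_contra hcon
    push Not at hcon
    exact hi (exists_congr hcon)

/-- A Banach space with property (D) contains no subspace isomorphic to `ℓ¹(I)` for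
an uncountable index set `I`: there is no bounded linear operator `T : ℓ¹(I) → X`
which is bounded below. -/
theorem no_ell1_uncountable_of_propertyD
    {X : Type*} [NormedAddCommGroup X] [NormedSpace ℝ X] [CompleteSpace X]
    (hX : HasPropertyD X)
    {I : Type*} [Uncountable I]
    (T : lp (fun _ : I => ℝ) 1 →L[ℝ] X) (c : ℝ) (hc : 0 < c) :
    ¬ (∀ u : lp (fun _ : I => ℝ) 1, c * ‖u‖ ≤ ‖T u‖) := by
  classical
  intro hb
  have hanti : AntilipschitzWith (Real.toNNReal c⁻¹) T := by
    refine T.antilipschitz_of_bound fun u => ?_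
    rw [Real.coe_toNNReal _ (inv_pos.2 hc).le, inv_mul_eq_div, le_div_iff₀ hc, mul_comm]
    exact hb u
  have hclo : IsClosed (Set.range T) := hanti.isClosed_range T.uniformContinuous
  have hext : ∀ g : lp (fun _ : I => ℝ) 1 →L[ℝ] ℝ,
      ∃ φ : X →L[ℝ] ℝ, ∀ u, φ (T u) = g u := by
    intro g
    let e := T.equivRange hanti.injective hclo
    obtain ⟨φ, hφ, -⟩ := exists_extension_norm_eq (T.range)
      (g.comp (e.symm : T.range →L[ℝ] lp (fun _ : I => ℝ) 1))
    refine ⟨φ, fun u => ?_⟩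
    have h := hφ (e u)
    have h2 : φ (T u) = g (e.symm (e u)) := h
    rwa [e.symm_apply_apply] at h2
  let b : I → X := fun i => T (lp.single 1 i 1)
  let Γ : Set (X →L[ℝ] ℝ) := {φ | {i | φ (b i) ≠ 0}.Countable}
  have htot : IsTotalSet X Γ := by
    intro x hx
    by_cases hxr : x ∈ Set.range T
    · obtain ⟨u, rfl⟩ := hxr
      have hu : ∃ i, u i ≠ 0 := by
        by_contra hcon
        push Not at hcon
        apply hx
        have : u = 0 := by
          ext i
          simpa using hcon i
        simp [this]
      obtain ⟨i, hi⟩ := hu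
      obtain ⟨φ, hφ⟩ := hext (lp.evalCLM ℝ (fun _ : I => ℝ) 1 i)
      refine ⟨φ, ?_, ?_⟩
      · refine (Set.countable_singleton i).mono fun j hj => ?_
        by_contra hne
        apply hj
        have hne' : i ≠ j := fun h => hne (by simp [h])
        change φ (T _) = 0
        rw [hφ]
        exact lp.single_apply_ne (E := fun _ : I => ℝ) 1 j (1 : ℝ) hne'
      · rw [hφ]
        exact hi
    · have hconv : Convex ℝ (Set.range T) := by
        have := (T.range).convex
        rwa [LinearMap.coe_range] at this
      obtain ⟨f, s, hf, hs⟩ := geometric_hahn_banach_closed_point hconv hclo hxr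
      refine ⟨f, ?_, ?_⟩
      · have h0 : ∀ i, f (b i) = 0 := by
          intro i
          by_contra hne
          have h := hf (T ((f x / f (b i)) • lp.single 1 i 1)) ⟨_, rfl⟩
          rw [map_smul, map_smul, smul_eq_mul] at h
          change _ / _ * f (b i) < s at h
          rw [div_mul_cancel₀ _ hne] at h
          linarith
        simp [Γ, h0]
      · have h := hf 0 ⟨0, map_zero T⟩
        rw [map_zero] at h
        linarith
  have hle : sigmaGen X Γ ≤ coctbl (0 : X) b := by
    refine iSup₂_le fun φ hφ => ?_
    rintro _ ⟨B, -, rfl⟩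
    refine Set.Countable.mono (fun i hi => ?_) (hφ : {i | φ (b i) ≠ 0}.Countable)
    intro h
    apply hi
    simp [h]
  obtain ⟨ψ, hψ⟩ := hext (lp.tsumCLM ℝ I ℝ)
  have hψ1 : ∀ i, ψ (b i) = 1 := by
    intro i
    change ψ (T _) = 1
    rw [hψ]
    simp [lp.tsumCLM]
  rw [hX Γ htot] at hle
  have hm : MeasurableSet[sigmaGen X Set.univ] ((fun x => ψ x) ⁻¹' {0}) := by
    refine (le_iSup₂_of_le (f := fun (φ : X →L[ℝ] ℝ) (_ : φ ∈ Set.univ) =>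
      MeasurableSpace.comap (fun x => φ x) Real.measurableSpace) ψ (Set.mem_univ _) le_rfl) _ ?_
    exact ⟨{0}, measurableSet_singleton _, rfl⟩
  have hcount : {i | ¬ (b i ∈ (fun x => ψ x) ⁻¹' {0} ↔ (0 : X) ∈ (fun x => ψ x) ⁻¹' {0})}.Countable :=
    hle _ hm
  simp [hψ1, Set.countable_univ_iff] at hcount
end

section
/- Let (Ω,Σ,ν) be a complete probability space, X a real Banach space, Γ ⊆ X* a total linear subspace, and f : Ω → X a Γ-integrable function. If the finitely additive vector measure I_f : Σ → X, I_f(A) = ∫_A f dν, is countably additive, then the family Z = {x* ∘ f : x* ∈ Γ, ‖x*‖ ≤ 1} is uniformly integrable in L¹(ν). -/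
open MeasureTheory Filter Topology

/-- A family `H` of real-valued functions is uniformly integrable in `L¹(ν)`:
it is bounded in `L¹`-norm and uniformly absolutely continuous. -/
def UnifIntegrableFam {Ω : Type*} [MeasurableSpace Ω] (ν : Measure Ω)
    (H : Set (Ω → ℝ)) : Prop :=
  (∃ C : ℝ, ∀ h ∈ H, ∫ ω, |h ω| ∂ν ≤ C) ∧
  ∀ ε : ℝ, 0 < ε → ∃ δ : ℝ, 0 < δ ∧ ∀ h ∈ H, ∀ A : Set Ω, MeasurableSet A →
    ν A ≤ ENNReal.ofReal δ → ∫ ω in A, |h ω| ∂ν ≤ ε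

/-- Continuity from below. -/
theorem aux_mono {Ω X : Type*} [MeasurableSpace Ω] [NormedAddCommGroup X]
    (m : Set Ω → X)
    (hadd : ∀ A B : Set Ω, MeasurableSet A → MeasurableSet B → Disjoint A B →
      m (A ∪ B) = m A + m B)
    (hca : ∀ A : ℕ → Set Ω, (∀ n, MeasurableSet (A n)) →
      Pairwise (Function.onFun Disjoint A) →
      Tendsto (fun N => ∑ n ∈ Finset.range N, m (A n)) atTop (𝓝 (m (⋃ n, A n))))
    (D : ℕ → Set Ω) (hD : Monotone D) (hDm : ∀ n, MeasurableSet (D n)) :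
    Tendsto (fun n => m (D n)) atTop (𝓝 (m (⋃ n, D n))) := by
  have h1 := hca (disjointed D) (fun n => MeasurableSet.disjointed hDm n) (disjoint_disjointed D)
  rw [iUnion_disjointed] at h1
  have h2 : ∀ N, ∑ n ∈ Finset.range (N + 1), m (disjointed D n) = m (D N) := by
    intro N
    induction N with
    | zero => simp
    | succ k ih =>
      rw [Finset.sum_range_succ, ih, hD.disjointed_add_one,
        ← hadd _ _ (hDm k) ((hDm _).diff (hDm k)) Set.disjoint_sdiff_right,
        Set.union_sdiff_cancel (hD (Nat.le_add_right k 1))]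
  have h3 := h1.comp (tendsto_add_atTop_nat 1)
  refine h3.congr fun N => ?_
  exact h2 N

/-- Pettis: absolute continuity. -/
theorem aux_ac {Ω X : Type*} [MeasurableSpace Ω] [NormedAddCommGroup X]
    (ν : Measure Ω) [IsProbabilityMeasure ν]
    (m : Set Ω → X)
    (hadd : ∀ A B : Set Ω, MeasurableSet A → MeasurableSet B → Disjoint A B →
      m (A ∪ B) = m A + m B)
    (hnull : ∀ A : Set Ω, MeasurableSet A → ν A = 0 → m A = 0)
    (hca : ∀ A : ℕ → Set Ω, (∀ n, MeasurableSet (A n)) →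
      Pairwise (Function.onFun Disjoint A) →
      Tendsto (fun N => ∑ n ∈ Finset.range N, m (A n)) atTop (𝓝 (m (⋃ n, A n))))
    (ε : ℝ) (hε : 0 < ε) :
    ∃ δ : ℝ, 0 < δ ∧ ∀ A, MeasurableSet A → ν A ≤ ENNReal.ofReal δ → ‖m A‖ ≤ ε := by
  by_contra! hcon
  choose A hAm hAν hAε using fun n : ℕ => hcon ((1 / 2 : ℝ) ^ n) (by positivity)
  have hlim : ν (limsup A atTop) = 0 := by
    apply measure_limsup_atTop_eq_zero
    refine ne_top_of_le_ne_top ?_ (ENNReal.tsum_le_tsum hAν)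
    rw [← ENNReal.ofReal_tsum_of_nonneg (fun n => by positivity) summable_geometric_two]
    exact ENNReal.ofReal_ne_top
  set B : ℕ → Set Ω := fun n => ⋃ j ≥ n, A j with hB
  have hBm : ∀ n, MeasurableSet (B n) := fun n =>
    MeasurableSet.iUnion fun j => MeasurableSet.iUnion fun _ => hAm j
  have hBanti : Antitone B := by
    intro a b hab x hx
    simp only [hB, Set.mem_iUnion] at hx ⊢
    obtain ⟨j, hj, hxj⟩ := hx
    exact ⟨j, le_trans hab hj, hxj⟩
  have hBν : ν (⋂ n, B n) = 0 := by
    rw [limsup_eq_iInf_iSup_of_nat] at hlim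
    exact hlim
  have hstep : ∀ k, ∃ n, k < n ∧ ε < ‖m (A k \ B n)‖ := by
    intro k
    have h1 := aux_mono m hadd hca (fun n => A k \ B n)
      (fun a b hab => Set.diff_subset_diff_right (hBanti hab)) (fun n => (hAm k).diff (hBm n))
    have h2 : m (⋃ n, A k \ B n) = m (A k) := by
      rw [← Set.diff_iInter]
      have h3 := hadd (A k \ ⋂ n, B n) (A k ∩ ⋂ n, B n) ((hAm k).diff (MeasurableSet.iInter hBm))
        ((hAm k).inter (MeasurableSet.iInter hBm)) Set.disjoint_sdiff_inter
      rw [Set.diff_union_inter, hnull (A k ∩ ⋂ n, B n) ((hAm k).inter (MeasurableSet.iInter hBm))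
        (measure_mono_null Set.inter_subset_right hBν), add_zero] at h3
      exact h3.symm
    rw [h2] at h1
    have h4 := h1.norm.eventually (lt_mem_nhds (hAε k))
    obtain ⟨n, hn1, hn2⟩ := (h4.and (eventually_gt_atTop k)).exists
    exact ⟨n, hn2, hn1⟩
  choose g hg1 hg2 using hstep
  set n : ℕ → ℕ := fun i => g^[i] 0 with hn
  have hns : ∀ i, n (i + 1) = g (n i) := fun i => Function.iterate_succ_apply' g i 0
  have hmono : StrictMono n := strictMono_nat_of_lt_succ fun i => by rw [hns]; exact hg1 _
  set E : ℕ → Set Ω := fun i => A (n i) \ B (n (i + 1)) with hE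
  have hdis : ∀ i j, i < j → Disjoint (E i) (E j) := by
    intro i j hij
    rw [Set.disjoint_left]
    rintro x ⟨_, hx⟩ ⟨hx2, _⟩
    apply hx
    simp only [hB, Set.mem_iUnion]
    exact ⟨n j, hmono.monotone hij, hx2⟩
  have h := hca E (fun i => (hAm _).diff (hBm _)) (by
    intro i j hij
    rcases lt_or_gt_of_ne hij with h | h
    · exact hdis i j h
    · exact (hdis j i h).symm)
  have h5 := (h.comp (tendsto_add_atTop_nat 1)).sub h
  simp only [Function.comp_def, Finset.sum_range_succ, add_sub_cancel_left, sub_self] at h5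
  have h6 := h5.norm.eventually (gt_mem_nhds (by simpa using hε))
  obtain ⟨i, hi⟩ := h6.exists
  have := hg2 (n i)
  rw [← hns] at this
  exact absurd hi (not_lt.mpr this.le)

/-- A countably additive scalar measure is bounded. -/
theorem aux_scalar {Ω : Type*} [MeasurableSpace Ω]
    (m : Set Ω → ℝ) (h0 : m ∅ = 0)
    (hca : ∀ A : ℕ → Set Ω, (∀ n, MeasurableSet (A n)) →
      Pairwise (Function.onFun Disjoint A) →
      Tendsto (fun N => ∑ n ∈ Finset.range N, m (A n)) atTop (𝓝 (m (⋃ n, A n)))) :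
    ∃ C, ∀ A, MeasurableSet A → |m A| ≤ C := by
  classical
  have hsub : ∀ A : ℕ → Set Ω, (∀ n, MeasurableSet (A n)) →
      Pairwise (Function.onFun Disjoint A) → ∀ p : ℕ → Prop,
      ∃ l, Tendsto (fun N => ∑ n ∈ Finset.range N, if p n then m (A n) else 0) atTop (𝓝 l) := by
    intro A hA hd p
    refine ⟨_, (hca (fun n => if p n then A n else ∅) ?_ ?_).congr ?_⟩
    · intro n
      split_ifs
      · exact hA n
      · exact MeasurableSet.empty
    · intro i j hij
      have := hd hij
      simp only [Function.onFun] at this ⊢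
      split_ifs <;> simp [this]
    · intro N
      refine Finset.sum_congr rfl fun n _ => ?_
      split_ifs <;> simp [h0]
  have hsum : ∀ A : ℕ → Set Ω, (∀ n, MeasurableSet (A n)) →
      Pairwise (Function.onFun Disjoint A) → Summable fun n => m (A n) := by
    intro A hA hd
    obtain ⟨l₁, h₁⟩ := hsub A hA hd (fun n => 0 ≤ m (A n))
    obtain ⟨l₂, h₂⟩ := hsub A hA hd (fun n => ¬ 0 ≤ m (A n))
    have s₁ := (hasSum_iff_tendsto_nat_of_nonneg (fun n => by split_ifs with h <;> simp [h]) l₁).2 h₁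
    have h₂' := h₂.neg
    simp only [← Finset.sum_neg_distrib] at h₂'
    have s₂ := (hasSum_iff_tendsto_nat_of_nonneg
      (fun n => by split_ifs with h <;> simp <;> linarith) (-l₂)).2 h₂'
    refine (s₁.sub s₂).summable.congr fun n => ?_
    by_cases h : 0 ≤ m (A n) <;> simp [h]
  let s : SignedMeasure Ω :=
    { measureOf' := fun A => if MeasurableSet A then m A else 0
      empty' := by simp [h0]
      not_measurable' := fun A hA => by simp [hA]
      m_iUnion' := fun A hA hd => by
        have h1 := (hsum A hA hd).hasSum
        have h2 := tendsto_nhds_unique h1.tendsto_sum_nat (hca A hA hd)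
        rw [h2] at h1
        simpa [hA, MeasurableSet.iUnion hA] using h1 }
  have hs : ∀ A, MeasurableSet A → s A = m A := fun A hA => by
    change (if MeasurableSet A then m A else 0) = m A
    simp [hA]
  set j := s.toJordanDecomposition with hj
  refine ⟨j.posPart.real Set.univ + j.negPart.real Set.univ, fun A hA => ?_⟩
  have h1 : s A = j.posPart.real A - j.negPart.real A := by
    conv_lhs => rw [← s.toSignedMeasure_toJordanDecomposition]
    rw [JordanDecomposition.toSignedMeasure, VectorMeasure.sub_apply,
      Measure.toSignedMeasure_apply_measurable hA, Measure.toSignedMeasure_apply_measurable hA]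
  rw [← hs A hA, h1]
  have a := measureReal_mono (μ := j.posPart) (Set.subset_univ A)
  have b := measureReal_mono (μ := j.negPart) (Set.subset_univ A)
  have c : 0 ≤ j.posPart.real A := measureReal_nonneg
  have d : 0 ≤ j.negPart.real A := measureReal_nonneg
  rw [abs_le]
  constructor <;> linarith

/-- Boundedness of a countably additive vector measure. -/
theorem aux_bdd {Ω X : Type*} [MeasurableSpace Ω] [NormedAddCommGroup X] [NormedSpace ℝ X]
    (m : Set Ω → X) (h0 : m ∅ = 0)
    (hca : ∀ A : ℕ → Set Ω, (∀ n, MeasurableSet (A n)) →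
      Pairwise (Function.onFun Disjoint A) →
      Tendsto (fun N => ∑ n ∈ Finset.range N, m (A n)) atTop (𝓝 (m (⋃ n, A n)))) :
    ∃ C, ∀ A, MeasurableSet A → ‖m A‖ ≤ C := by
  have h := banach_steinhaus
    (g := fun A : {A : Set Ω // MeasurableSet A} =>
      NormedSpace.inclusionInDoubleDual ℝ X (m A.1)) (by
    intro φ
    obtain ⟨C, hC⟩ := aux_scalar (fun A => φ (m A)) (by simp [h0]) (fun A hA hd => by
      have := (φ.continuous.tendsto _).comp (hca A hA hd)
      simpa [Function.comp_def] using this)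
    exact ⟨C, fun A => by simpa using hC A.1 A.2⟩)
  obtain ⟨C, hC⟩ := h
  refine ⟨C, fun A hA => ?_⟩
  have := hC ⟨A, hA⟩
  rwa [show ‖NormedSpace.inclusionInDoubleDual ℝ X (m A)‖ = ‖m A‖ from
    (NormedSpace.inclusionInDoubleDualLi ℝ (E := X)).norm_map (m A)] at this

/-- If `f : Ω → X` is `Γ`-integrable (with indefinite integral `m`) and the vector
measure `m` is countably additive, then `{x* ∘ f : x* ∈ Γ, ‖x*‖ ≤ 1}` is uniformly
integrable in `L¹(ν)`. -/
theorem unifIntegrable_of_countably_additive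
    {Ω X : Type*} [MeasurableSpace Ω] [NormedAddCommGroup X] [NormedSpace ℝ X]
    [CompleteSpace X]
    (ν : Measure Ω) [IsProbabilityMeasure ν] [ν.IsComplete]
    (Γ : Submodule ℝ (X →L[ℝ] ℝ))
    (htotal : ∀ x : X, x ≠ 0 → ∃ φ ∈ Γ, φ x ≠ 0)
    (f : Ω → X)
    (hscal : ∀ φ ∈ Γ, Integrable (fun ω => φ (f ω)) ν)
    (m : Set Ω → X)
    (hm : ∀ A : Set Ω, MeasurableSet A → ∀ φ ∈ Γ, φ (m A) = ∫ ω in A, φ (f ω) ∂ν)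
    (hca : ∀ A : ℕ → Set Ω, (∀ n, MeasurableSet (A n)) →
      Pairwise (Function.onFun Disjoint A) →
      Tendsto (fun N => ∑ n ∈ Finset.range N, m (A n)) atTop (𝓝 (m (⋃ n, A n)))) :
    UnifIntegrableFam ν {g | ∃ φ ∈ Γ, ‖φ‖ ≤ 1 ∧ g = fun ω => φ (f ω)} := by
  have heq : ∀ x y : X, (∀ φ ∈ Γ, φ x = φ y) → x = y := by
    intro x y h
    by_contra hne
    obtain ⟨φ, hφ, h2⟩ := htotal (x - y) (sub_ne_zero.mpr hne)
    exact h2 (by rw [map_sub, h φ hφ, sub_self])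
  have hadd : ∀ A B : Set Ω, MeasurableSet A → MeasurableSet B → Disjoint A B →
      m (A ∪ B) = m A + m B := by
    intro A B hA hB hd
    refine heq _ _ fun φ hφ => ?_
    rw [map_add, hm _ (hA.union hB) φ hφ, hm A hA φ hφ, hm B hB φ hφ,
      setIntegral_union hd hB (hscal φ hφ).integrableOn (hscal φ hφ).integrableOn]
  have hnull : ∀ A : Set Ω, MeasurableSet A → ν A = 0 → m A = 0 := by
    intro A hA h
    refine heq _ _ fun φ hφ => ?_
    rw [hm A hA φ hφ, setIntegral_measure_zero _ h, map_zero]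
  have hkey : ∀ φ ∈ Γ, ‖φ‖ ≤ 1 → ∀ A, MeasurableSet A → ∀ c : ℝ,
      (∀ E, MeasurableSet E → E ⊆ A → ‖m E‖ ≤ c) → ∫ ω in A, |φ (f ω)| ∂ν ≤ 2 * c := by
    intro φ hφ hφ1 A hA c hc
    have hint := hscal φ hφ
    have hP : MeasurableSet {ω | 0 ≤ φ (f ω)} :=
      (nullMeasurableSet_le aemeasurable_const hint.aemeasurable).measurable_of_complete
    have hle : ∀ E, MeasurableSet E → E ⊆ A → |∫ ω in E, φ (f ω) ∂ν| ≤ c := by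
      intro E hE hEA
      rw [← hm E hE φ hφ]
      calc |φ (m E)| ≤ ‖φ‖ * ‖m E‖ := φ.le_opNorm _
        _ ≤ 1 * ‖m E‖ := by gcongr
        _ ≤ c := by rw [one_mul]; exact hc E hE hEA
    have h1 := integral_inter_add_diff (μ := ν) (s := A) hP hint.abs.integrableOn
    have h2 : ∫ ω in A ∩ {ω | 0 ≤ φ (f ω)}, |φ (f ω)| ∂ν
        = ∫ ω in A ∩ {ω | 0 ≤ φ (f ω)}, φ (f ω) ∂ν :=
      setIntegral_congr_fun (hA.inter hP) fun ω hω => abs_of_nonneg hω.2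
    have h3 : ∫ ω in A \ {ω | 0 ≤ φ (f ω)}, |φ (f ω)| ∂ν
        = - ∫ ω in A \ {ω | 0 ≤ φ (f ω)}, φ (f ω) ∂ν := by
      rw [← integral_neg]
      exact setIntegral_congr_fun (hA.diff hP) fun ω hω =>
        abs_of_neg (not_le.mp hω.2)
    have h4 := abs_le.mp (hle _ (hA.inter hP) Set.inter_subset_left)
    have h5 := abs_le.mp (hle _ (hA.diff hP) Set.diff_subset)
    rw [← h1, h2, h3]
    linarith [h4.2, h5.1]
  constructor
  · obtain ⟨C, hC⟩ := aux_bdd m (hnull ∅ MeasurableSet.empty measure_empty) hca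
    refine ⟨2 * C, ?_⟩
    rintro h ⟨φ, hφ, hφ1, rfl⟩
    have := hkey φ hφ hφ1 Set.univ MeasurableSet.univ C (fun E hE _ => hC E hE)
    rwa [setIntegral_univ] at this
  · intro ε hε
    obtain ⟨δ, hδ, hac⟩ := aux_ac ν m hadd hnull hca (ε / 2) (by positivity)
    refine ⟨δ, hδ, ?_⟩
    rintro h ⟨φ, hφ, hφ1, rfl⟩ A hA hνA
    have := hkey φ hφ hφ1 A hA (ε / 2)
      (fun E hE hEA => hac E hE ((measure_mono hEA).trans hνA))
    linarith
end

section
/- Let (Ω,Σ,ν) be a complete probability space, X a real Banach space, Γ ⊆ X* a total linear subspace, and f : Ω → X a Γ-integrable function such that the vector measure I_f : Σ → X, I_f(A) = ∫_A f dν, is countably additive. If there is a partition Ω = ⋃_{n∈ℕ} A_n into countably many pairwise disjoint measurable sets such that each restriction f|_{A_n} is Pettis integrable (with respect to ν restricted to A_n), then f is Pettis integrable. -/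
open MeasureTheory Filter Topology

/-- `f` is Pettis integrable with respect to `ν`: every `x* ∘ f` is integrable and
each set `A` admits a Pettis integral `∫_A f dν ∈ X`. -/
def PettisIntegrable {Ω X : Type*} [MeasurableSpace Ω]
    [NormedAddCommGroup X] [NormedSpace ℝ X]
    (ν : Measure Ω) (f : Ω → X) : Prop :=
  (∀ φ : X →L[ℝ] ℝ, Integrable (fun ω => φ (f ω)) ν) ∧
  ∀ A : Set Ω, MeasurableSet A → ∃ m : X, ∀ φ : X →L[ℝ] ℝ, φ m = ∫ ω in A, φ (f ω) ∂ν

/-- If `f : Ω → X` is `Γ`-integrable with countably additive indefinite integral `m`,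
and there is a countable measurable partition of `Ω` on each piece of which `f` is
Pettis integrable, then `f` is Pettis integrable. -/
theorem pettis_of_partition
    {Ω X : Type*} [MeasurableSpace Ω] [NormedAddCommGroup X] [NormedSpace ℝ X]
    [CompleteSpace X]
    (ν : Measure Ω) [IsProbabilityMeasure ν] [ν.IsComplete]
    (Γ : Submodule ℝ (X →L[ℝ] ℝ))
    (htotal : ∀ x : X, x ≠ 0 → ∃ φ ∈ Γ, φ x ≠ 0)
    (f : Ω → X)
    (hscal : ∀ φ ∈ Γ, Integrable (fun ω => φ (f ω)) ν)
    (m : Set Ω → X)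
    (hm : ∀ A : Set Ω, MeasurableSet A → ∀ φ ∈ Γ, φ (m A) = ∫ ω in A, φ (f ω) ∂ν)
    (hca : ∀ A : ℕ → Set Ω, (∀ n, MeasurableSet (A n)) →
      Pairwise (Function.onFun Disjoint A) →
      Tendsto (fun N => ∑ n ∈ Finset.range N, m (A n)) atTop (𝓝 (m (⋃ n, A n))))
    (A : ℕ → Set Ω) (hAmeas : ∀ n, MeasurableSet (A n))
    (hAdisj : Pairwise (Function.onFun Disjoint A))
    (hAcover : (⋃ n, A n) = Set.univ)
    (hPettis : ∀ n, PettisIntegrable (ν.restrict (A n)) f) :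
    PettisIntegrable ν f := by
  have key : ∀ n, ∀ B, MeasurableSet B → ∀ φ : X →L[ℝ] ℝ,
      φ (m (B ∩ A n)) = ∫ ω in B ∩ A n, φ (f ω) ∂ν := by
    intro n B hB φ
    obtain ⟨x, hx⟩ := (hPettis n).2 B hB
    simp only [Measure.restrict_restrict hB] at hx
    have : m (B ∩ A n) = x := by
      by_contra hne
      obtain ⟨ψ, hψ, h0⟩ := htotal _ (sub_ne_zero.mpr hne)
      apply h0
      rw [map_sub, hm _ (hB.inter (hAmeas n)) ψ hψ, hx ψ, sub_self]
    rw [this, hx φ]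
  have hdisj : ∀ B : Set Ω, Pairwise (Function.onFun Disjoint fun n => B ∩ A n) := by
    intro B i j hij
    exact (hAdisj hij).mono Set.inter_subset_right Set.inter_subset_right
  have hun : ∀ B : Set Ω, (⋃ n, B ∩ A n) = B := by
    intro B
    rw [← Set.inter_iUnion, hAcover, Set.inter_univ]
  have lim : ∀ B, MeasurableSet B → ∀ φ : X →L[ℝ] ℝ,
      Tendsto (fun N => ∑ n ∈ Finset.range N, ∫ ω in B ∩ A n, φ (f ω) ∂ν) atTop
        (𝓝 (φ (m B))) := by
    intro B hB φ
    have h := hca (fun n => B ∩ A n) (fun n => hB.inter (hAmeas n)) (hdisj B)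
    rw [hun B] at h
    have h2 := (φ.continuous.tendsto _).comp h
    refine h2.congr fun N => ?_
    simp only [Function.comp, map_sum]
    exact Finset.sum_congr rfl fun n _ => key n B hB φ
  have hint : ∀ φ : X →L[ℝ] ℝ, Integrable (fun ω => φ (f ω)) ν := by
    intro φ
    have hIn : ∀ n, IntegrableOn (fun ω => φ (f ω)) (A n) ν := fun n => (hPettis n).1 φ
    have hmeas : AEMeasurable (fun ω => φ (f ω)) ν := by
      have h : AEMeasurable (fun ω => φ (f ω)) (ν.restrict (⋃ n, A n)) :=
        aemeasurable_iUnion_iff.mpr fun n => (hIn n).aemeasurable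
      rwa [hAcover, Measure.restrict_univ] at h
    have hg := hmeas.ae_eq_mk
    set g := hmeas.mk _ with hgdef
    have hP : MeasurableSet {ω | 0 ≤ g ω} :=
      measurableSet_le measurable_const hmeas.measurable_mk
    set P := {ω | 0 ≤ g ω} with hPdef
    have hsplit : ∀ n, ∫ ω in A n, ‖φ (f ω)‖ ∂ν =
        (∫ ω in P ∩ A n, φ (f ω) ∂ν) - ∫ ω in Pᶜ ∩ A n, φ (f ω) ∂ν := by
      intro n
      rw [← integral_inter_add_diff hP (hIn n).norm, sub_eq_add_neg, ← integral_neg,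
        Set.diff_eq, Set.inter_comm (A n) P, Set.inter_comm (A n) Pᶜ]
      congr 1
      · refine setIntegral_congr_ae (hP.inter (hAmeas n)) ?_
        filter_upwards [hg] with ω hω hmem
        have h0 : 0 ≤ g ω := hmem.1
        rw [hω, Real.norm_of_nonneg h0]
      · refine setIntegral_congr_ae (hP.compl.inter (hAmeas n)) ?_
        filter_upwards [hg] with ω hω hmem
        have h0 : ¬ 0 ≤ g ω := hmem.1
        rw [hω, Real.norm_of_nonpos (le_of_not_ge h0)]
    have hsum : Summable fun n => ∫ ω in A n, ‖φ (f ω)‖ ∂ν := by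
      have h := (lim P hP φ).sub (lim Pᶜ hP.compl φ)
      refine ((hasSum_iff_tendsto_nat_of_nonneg
        (fun n => integral_nonneg fun ω => norm_nonneg _) _).mpr (h.congr fun N => ?_)).summable
      rw [← Finset.sum_sub_distrib]
      exact Finset.sum_congr rfl fun n _ => (hsplit n).symm
    have h := integrableOn_iUnion_of_summable_integral_norm hIn hsum
    rwa [hAcover, integrableOn_univ] at h
  refine ⟨hint, fun B hB => ⟨m B, fun φ => ?_⟩⟩
  have h := hasSum_integral_iUnion (fun n => hB.inter (hAmeas n)) (hdisj B)
    ((hint φ).integrableOn)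
  rw [hun B] at h
  exact tendsto_nhds_unique (lim B hB φ) h.tendsto_sum_nat
end

section
/- Let (Ω,Σ,ν) be a complete probability space and X a real Banach space which has property (D) and the ν-Pettis Integral Property. Then for every total linear subspace Γ ⊆ X*, every Γ-integrable function f : Ω → X is Pettis integrable. -/
open MeasureTheory Filter Topology

/-- `X` has the `ν`-Pettis Integral Property: every scalarly measurable and scalarly
bounded function `f : Ω → X` is Pettis integrable. -/
def HasPIP {Ω : Type*} [MeasurableSpace Ω] (ν : Measure Ω)
    (X : Type*) [NormedAddCommGroup X] [NormedSpace ℝ X] : Prop :=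
  ∀ f : Ω → X,
    (∀ φ : X →L[ℝ] ℝ, Measurable (fun ω => φ (f ω))) →
    (∃ c : ℝ, 0 < c ∧ ∀ φ : X →L[ℝ] ℝ, ∀ᵐ ω ∂ν, |φ (f ω)| ≤ c * ‖φ‖) →
    PettisIntegrable ν f

lemma charge_small (lam : (ℕ → Bool) → ℝ) (hm : Measurable lam)
    (hadd : ∀ x y z : ℕ → Bool, (∀ n, z n = (x n || y n)) →
      (∀ n, (x n && y n) = false) → lam z = lam x + lam y)
    (ε : ℝ) (hε : 0 < ε) :
    ∃ N : ℕ, ∀ S : ℕ → Bool, (∀ n < N, S n = false) → |lam S| ≤ 3 * ε := by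
  let E : ℤ → Set (ℕ → Bool) := fun i => {x | ⌊lam x / ε⌋ = i}
  have hE : ∀ i, MeasurableSet (E i) := fun i =>
    (Int.measurable_floor.comp (hm.div_const ε)) (measurableSet_singleton i)
  choose U hUo hU using fun i => (hE i).residualEq_isOpen
  have hU' : ∀ i, ∀ᶠ x in residual (ℕ → Bool), x ∈ E i ↔ x ∈ U i := fun i =>
    Filter.eventuallyEq_set.1 (hU i)
  obtain ⟨x, hx⟩ := (dense_of_mem_residual (eventually_countable_forall.2 hU')).nonempty
  set i := ⌊lam x / ε⌋ with hi
  have hxU : x ∈ U i := (hx i).1 rfl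
  obtain ⟨I, u, hu, hsub⟩ := isOpen_pi_iff.1 (hUo i) x hxU
  refine ⟨I.sup id + 1, fun S hS => ?_⟩
  set N := I.sup id + 1 with hN
  have hcyl : ∀ y : ℕ → Bool, (∀ n < N, y n = x n) → y ∈ U i := by
    intro y hy
    apply hsub
    intro n hn
    have : n ≤ I.sup id := Finset.le_sup (f := id) hn
    rw [hy n (by omega)]
    exact (hu n hn).2
  let t : Fin 3 → ℕ → Fin 3 → Bool := fun j n c => if n < N then x n else decide (c = j)
  let t' : Fin 3 → ℕ → Fin 3 → Bool := fun j n c => if n < N then x n else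
    (decide (c = j) || (S n && decide (c = j + 1)))
  have key : ∀ g : ℕ → Fin 3 → Bool, (∀ n < N, ∀ c, g n c = x n) →
      (∀ n, N ≤ n → Function.Surjective (g n)) →
      ∀ᶠ c in residual (ℕ → Fin 3), Pi.map g c ∈ E i := by
    intro g hg hs
    have ho : IsOpenMap (Pi.map g) := by
      refine IsOpenMap.piMap (fun n s _ => isOpen_discrete _) ?_
      rw [Nat.cofinite_eq_atTop]
      filter_upwards [eventually_ge_atTop N] with n hn using hs n hn
    have hc : Continuous (Pi.map g) := by
      refine continuous_pi fun n => ?_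
      exact (continuous_of_discreteTopology (f := g n)).comp (continuous_apply n)
    filter_upwards [(tendsto_residual_of_isOpenMap hc ho).eventually (hU' i)] with c hc
    exact hc.2 (hcyl _ fun n hn => hg n hn _)
  have h1 : ∀ j, ∀ᶠ c in residual (ℕ → Fin 3), Pi.map (t j) c ∈ E i := by
    intro j
    refine key _ (fun n hn c => by simp [t, hn]) fun n hn b => ?_
    have : ¬ n < N := by omega
    cases b
    · exact ⟨j + 1, by simp [t, this]⟩
    · exact ⟨j, by simp [t, this]⟩
  have h2 : ∀ j, ∀ᶠ c in residual (ℕ → Fin 3), Pi.map (t' j) c ∈ E i := by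
    intro j
    refine key _ (fun n hn c => by simp [t', hn]) fun n hn b => ?_
    have : ¬ n < N := by omega
    cases b
    · refine ⟨j + 2, ?_⟩
      have a1 : j + 2 ≠ j := by revert j; decide
      have a2 : j + 2 ≠ j + 1 := by revert j; decide
      simp [t', this]
    · exact ⟨j, by simp [t', this]⟩
  obtain ⟨c, hc1, hc2⟩ := (dense_of_mem_residual
    ((eventually_countable_forall.2 h1).and (eventually_countable_forall.2 h2))).nonempty
  have hd : ∀ y z, y ∈ E i → z ∈ E i → |lam y - lam z| ≤ ε := by
    intro y z hy hz
    have hy' : ⌊lam y / ε⌋ = i := hy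
    have hz' : ⌊lam z / ε⌋ = i := hz
    have := Int.abs_sub_lt_one_of_floor_eq_floor (hy'.trans hz'.symm)
    rw [← sub_div, abs_div, abs_of_pos hε, div_lt_one hε] at this
    exact this.le
  let P : Fin 3 → ℕ → Bool := fun j n => S n && decide (c n = j)
  have hP : ∀ j, |lam (P (j + 1))| ≤ ε := by
    intro j
    have h := hadd (Pi.map (t j) c) (P (j + 1)) (Pi.map (t' j) c) (by
      intro n
      by_cases hn : n < N
      · simp [Pi.map, t, t', P, hn, hS n hn]
      · simp [Pi.map, t, t', P, hn]) (by
      intro n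
      by_cases hn : n < N
      · simp [P, hS n hn]
      · have a1 : j ≠ j + 1 := by revert j; decide
        simp [Pi.map, t, P, hn]
        grind)
    have h' := hd _ _ (hc2 j) (hc1 j)
    rwa [h, add_sub_cancel_left] at h'
  have e1 := hadd (P 0) (P 1) (fun n => P 0 n || P 1 n) (fun _ => rfl) (by
    intro n; simp [P]; grind)
  have e2 := hadd (fun n => P 0 n || P 1 n) (P 2) S (by
    intro n
    simp only [P]
    generalize c n = k
    generalize S n = b
    revert k b; decide) (by
    intro n
    simp only [P]
    generalize c n = k
    generalize S n = b
    revert k b; decide)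
  have p0 := hP 2
  have p1 := hP 0
  have p2 := hP 1
  have q0 : (2 : Fin 3) + 1 = 0 := by decide
  have q1 : (0 : Fin 3) + 1 = 1 := by decide
  have q2 : (1 : Fin 3) + 1 = 2 := by decide
  rw [q0] at p0; rw [q1] at p1; rw [q2] at p2
  rw [e2, e1]
  rw [abs_le] at *
  constructor <;> linarith [p0.1, p0.2, p1.1, p1.2, p2.1, p2.2]

lemma ess_union {Ω ι : Type*} [MeasurableSpace Ω] [Nonempty ι] (ν : Measure Ω)
    [IsFiniteMeasure ν] (B : ι → Set Ω) (hB : ∀ i, MeasurableSet (B i)) :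
    ∃ s : ℕ → ι, ∀ i, ν (B i \ ⋃ k, B (s k)) = 0 := by
  let v : (ℕ → ι) → ENNReal := fun s => ν (⋃ k, B (s k))
  obtain ⟨u, -, hu, hur⟩ := exists_seq_tendsto_sSup (S := Set.range v) (Set.range_nonempty v)
    (OrderTop.bddAbove _)
  choose w hw using hur
  let s : ℕ → ι := fun k => w (Nat.unpair k).1 (Nat.unpair k).2
  have hs : ∀ n, (⋃ k, B (w n k)) ⊆ ⋃ k, B (s k) := by
    intro n
    refine Set.iUnion_subset fun k => ?_
    refine Set.subset_iUnion_of_subset (Nat.pair n k) ?_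
    simp [s]
  have hmax : sSup (Set.range v) ≤ v s := by
    refine le_of_tendsto' hu fun n => ?_
    rw [← hw n]
    exact measure_mono (hs n)
  refine ⟨s, fun i => ?_⟩
  let s' : ℕ → ι := fun k => Nat.casesOn k i s
  have hs' : (⋃ k, B (s' k)) = (⋃ k, B (s k)) ∪ (B i \ ⋃ k, B (s k)) := by
    rw [Set.union_diff_self, Set.union_comm]
    ext ω
    simp only [Set.mem_iUnion, Set.mem_union]
    constructor
    · rintro ⟨k, hk⟩
      cases k with
      | zero => exact Or.inl hk
      | succ k => exact Or.inr ⟨k, hk⟩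
    · rintro (h | ⟨k, hk⟩)
      · exact ⟨0, h⟩
      · exact ⟨k + 1, hk⟩
  have h1 : v s' ≤ v s := (le_sSup (Set.mem_range_self s')).trans hmax
  have hms : MeasurableSet (⋃ k, B (s k)) := MeasurableSet.iUnion fun k => hB _
  have h2 : v s' = v s + ν (B i \ ⋃ k, B (s k)) := by
    change ν _ = _
    rw [hs', measure_union disjoint_sdiff_self_right ((hB i).diff hms)]
  rw [h2] at h1
  have hfin : v s ≠ ⊤ := measure_ne_top _ _
  have : v s + ν (B i \ ⋃ k, B (s k)) ≤ v s + 0 := by simpa using h1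
  simpa using (ENNReal.add_le_add_iff_left hfin).1 this

lemma measurable_of_D {α X : Type*} [MeasurableSpace α] [NormedAddCommGroup X] [NormedSpace ℝ X]
    (hD : HasPropertyD X) (Γ : Set (X →L[ℝ] ℝ)) (ht : IsTotalSet X Γ) (g : α → X)
    (h : ∀ φ ∈ Γ, Measurable fun a => φ (g a)) (φ : X →L[ℝ] ℝ) :
    Measurable fun a => φ (g a) := by
  have h1 : sigmaGen X Γ ≤ MeasurableSpace.map g inferInstance := by
    refine iSup₂_le fun ψ hψ => ?_
    rintro s ⟨t, ht, rfl⟩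
    exact h ψ hψ ht
  rw [hD Γ ht] at h1
  intro t ht
  have h2 : MeasurableSpace.comap (fun x => φ x) Real.measurableSpace ≤ sigmaGen X Set.univ :=
    le_iSup₂_of_le φ (Set.mem_univ _) le_rfl
  exact h1 _ (h2 _ ⟨t, ht, rfl⟩)

/-- A scalarly measurable function is scalarly bounded on the pieces of a countable partition. -/
lemma exists_partition {Ω X : Type*} [MeasurableSpace Ω] [NormedAddCommGroup X] [NormedSpace ℝ X]
    (ν : Measure Ω) [IsFiniteMeasure ν] (f : Ω → X)
    (hf : ∀ φ : X →L[ℝ] ℝ, Measurable fun ω => φ (f ω)) :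
    ∃ A : ℕ → Set Ω, (∀ n, MeasurableSet (A n)) ∧ Pairwise (Function.onFun Disjoint A) ∧
      (⋃ n, A n) = Set.univ ∧
      ∀ n, ∀ φ : X →L[ℝ] ℝ, ∀ᵐ ω ∂ν, ω ∈ A n → |φ (f ω)| ≤ (n + 1 : ℝ) * ‖φ‖ := by
  let ι := {φ : X →L[ℝ] ℝ // ‖φ‖ ≤ 1}
  haveI : Nonempty ι := ⟨⟨0, by simp⟩⟩
  let B : ℕ → ι → Set Ω := fun n φ => {ω | (n + 1 : ℝ) < |φ.1 (f ω)|}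
  have hB : ∀ n φ, MeasurableSet (B n φ) := fun n φ =>
    measurableSet_lt measurable_const (hf φ.1).abs
  choose s hs using fun n => ess_union ν (B n) (hB n)
  let C : ℕ → Set Ω := fun n => (⋃ k, B n (s n k))ᶜ
  have hC : ∀ n, MeasurableSet (C n) := fun n => (MeasurableSet.iUnion fun k => hB _ _).compl
  refine ⟨disjointed C, fun n => MeasurableSet.disjointed hC n, disjoint_disjointed C, ?_, ?_⟩
  · rw [iUnion_disjointed, Set.eq_univ_iff_forall]
    intro ω
    obtain ⟨n, hn⟩ := exists_nat_ge ‖f ω‖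
    refine Set.mem_iUnion.2 ⟨n, ?_⟩
    simp only [C, Set.mem_compl_iff, Set.mem_iUnion, not_exists, B, Set.mem_setOf_eq, not_lt]
    intro k
    have h1 := (s n k).1.le_opNorm (f ω)
    have h2 := (s n k).2
    rw [Real.norm_eq_abs] at h1
    nlinarith [norm_nonneg (f ω)]
  · intro n φ
    by_cases h0 : φ = 0
    · simp [h0]
    have hpos : 0 < ‖φ‖ := norm_pos_iff.2 h0
    let ψ : ι := ⟨‖φ‖⁻¹ • φ, by rw [norm_smul]; simp [hpos.ne']⟩
    have := hs n ψ
    rw [measure_eq_zero_iff_ae_notMem] at this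
    filter_upwards [this] with ω hω hA
    have hCω : ω ∉ ⋃ k, B n (s n k) := disjointed_subset C n hA
    have h3 : ω ∉ B n ψ := fun h => hω ⟨h, hCω⟩
    simp only [B, Set.mem_setOf_eq, not_lt, ψ, ContinuousLinearMap.smul_apply, smul_eq_mul,
      abs_mul, abs_inv, abs_norm] at h3
    rwa [inv_mul_le_iff₀ hpos, mul_comm] at h3

/-- If `X` has property (D) and the `ν`-PIP, then for every total linear subspace
`Γ ⊆ X*` every `Γ`-integrable function `f : Ω → X` is Pettis integrable. -/
theorem pettis_of_gamma_integrable_of_propertyD_and_PIP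
    {Ω X : Type*} [MeasurableSpace Ω] [NormedAddCommGroup X] [NormedSpace ℝ X]
    [CompleteSpace X]
    (ν : Measure Ω) [IsProbabilityMeasure ν] [ν.IsComplete]
    (hD : HasPropertyD X) (hPIP : HasPIP ν X)
    (Γ : Submodule ℝ (X →L[ℝ] ℝ))
    (htotal : ∀ x : X, x ≠ 0 → ∃ φ ∈ Γ, φ x ≠ 0)
    (f : Ω → X)
    (hscal : ∀ φ ∈ Γ, Integrable (fun ω => φ (f ω)) ν)
    (hint : ∀ A : Set Ω, MeasurableSet A →
      ∃ m : X, ∀ φ ∈ Γ, φ m = ∫ ω in A, φ (f ω) ∂ν) :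
    PettisIntegrable ν f := by
  have hT : IsTotalSet X (Γ : Set (X →L[ℝ] ℝ)) := htotal
  have hfm : ∀ φ : X →L[ℝ] ℝ, Measurable fun ω => φ (f ω) :=
    measurable_of_D hD Γ hT f fun φ hφ =>
      aemeasurable_iff_measurable.1 (hscal φ hφ).aestronglyMeasurable.aemeasurable
  have huniq : ∀ x y : X, (∀ φ ∈ Γ, φ x = φ y) → x = y := by
    intro x y h
    by_contra hne
    obtain ⟨φ, hφ, h'⟩ := htotal (x - y) (sub_ne_zero.2 hne)
    exact h' (by rw [map_sub, h φ hφ, sub_self])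
  choose! m hm using hint
  have hmadd : ∀ A B : Set Ω, MeasurableSet A → MeasurableSet B → Disjoint A B →
      m (A ∪ B) = m A + m B := by
    intro A B hA hB hAB
    refine huniq _ _ fun φ hφ => ?_
    rw [map_add, hm _ (hA.union hB) φ hφ, hm _ hA φ hφ, hm _ hB φ hφ]
    exact setIntegral_union hAB hB (hscal φ hφ).integrableOn (hscal φ hφ).integrableOn
  have hca : ∀ (C : ℕ → Set Ω), (∀ n, MeasurableSet (C n)) →
      Pairwise (Function.onFun Disjoint C) → ∀ φ : X →L[ℝ] ℝ,
      Tendsto (fun N => ∑ n ∈ Finset.range N, φ (m (C n))) atTop (𝓝 (φ (m (⋃ n, C n)))) := by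
    intro C hC hdis φ
    let V : (ℕ → Bool) → Set Ω := fun x => ⋃ n, if x n then C n else ∅
    have hVm : ∀ x, MeasurableSet (V x) := fun x =>
      MeasurableSet.iUnion fun n => by split_ifs <;> simp [hC]
    have hVmem : ∀ x ω, ω ∈ V x ↔ ∃ n, x n = true ∧ ω ∈ C n := by
      intro x ω
      simp only [V, Set.mem_iUnion]
      refine exists_congr fun n => ?_
      split_ifs with h <;> simp [h]
    have hmeasV : ∀ φ : X →L[ℝ] ℝ, Measurable fun x => φ (m (V x)) := by
      refine measurable_of_D hD Γ hT (fun x => m (V x)) fun ψ hψ => ?_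
      have heq : ∀ x, HasSum (fun n => if x n then ∫ ω in C n, ψ (f ω) ∂ν else 0)
          (ψ (m (V x))) := by
        intro x
        rw [hm _ (hVm x) ψ hψ]
        have := hasSum_integral_iUnion (μ := ν) (f := fun ω => ψ (f ω))
          (s := fun n => if x n then C n else ∅)
          (fun n => by split_ifs <;> simp [hC]) (by
            intro i j hij
            have := hdis hij
            simp only [Function.onFun] at this ⊢
            split_ifs <;> simp [this]) (hscal ψ hψ).integrableOn
        have hfun : (fun n => if x n then ∫ ω in C n, ψ (f ω) ∂ν else 0) =
            fun n => ∫ ω in (if x n then C n else ∅), ψ (f ω) ∂ν := by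
          ext n
          split_ifs <;> simp
        rw [hfun]
        exact this
      refine measurable_of_tendsto_metrizable
        (f := fun N x => ∑ n ∈ Finset.range N, if x n then ∫ ω in C n, ψ (f ω) ∂ν else 0) ?_ ?_
      · intro N
        refine Finset.measurable_sum _ fun n _ => ?_
        exact (measurable_from_top (f := fun b : Bool =>
          if b then ∫ ω in C n, ψ (f ω) ∂ν else 0)).comp (measurable_pi_apply n)
      · rw [tendsto_pi_nhds]
        exact fun x => (heq x).tendsto_sum_nat
    have hVadd : ∀ x y z : ℕ → Bool, (∀ n, z n = (x n || y n)) →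
        (∀ n, (x n && y n) = false) → m (V z) = m (V x) + m (V y) := by
      intro x y z hz hxy
      have h1 : V z = V x ∪ V y := by
        ext ω
        simp only [Set.mem_union, hVmem, hz, Bool.or_eq_true, ← exists_or, or_and_right]
      rw [h1]
      refine hmadd _ _ (hVm x) (hVm y) ?_
      rw [Set.disjoint_left]
      intro ω hx hy
      obtain ⟨i, hi, hωi⟩ := (hVmem _ _).1 hx
      obtain ⟨j, hj, hωj⟩ := (hVmem _ _).1 hy
      by_cases hij : i = j
      · subst hij
        have := hxy i
        simp [hi, hj] at this
      · exact Set.disjoint_left.1 (hdis hij) hωi hωj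
    have hsmall := charge_small (fun x => φ (m (V x))) (hmeasV φ) (by
      intro x y z h1 h2
      simp only [hVadd x y z h1 h2, map_add])
    have hm0 : m ∅ = 0 := by
      have := hmadd ∅ ∅ .empty .empty (by simp)
      simpa using this
    have hfin : ∀ N, m (V fun n => decide (n < N)) = ∑ n ∈ Finset.range N, m (C n) := by
      intro N
      induction N with
      | zero =>
        have : V (fun n => decide (n < 0)) = ∅ := by
          ext ω; simp [hVmem]
        rw [this, hm0]; simp
      | succ N ih =>
        rw [hVadd (fun n => decide (n < N)) (fun n => decide (n = N)) _ (by
          intro n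
          rw [Bool.eq_iff_iff]
          simp; omega) (by intro n; simp; omega), ih, Finset.sum_range_succ]
        congr 2
        ext ω; simp [hVmem]
    have hall : V (fun _ => true) = ⋃ n, C n := by
      ext ω; simp [hVmem]
    rw [Metric.tendsto_atTop]
    intro ε hε
    obtain ⟨N, hN⟩ := hsmall (ε / 4) (by positivity)
    refine ⟨N, fun k hk => ?_⟩
    have h1 := hVadd (fun n => decide (n < k)) (fun n => decide (k ≤ n)) (fun _ => true) (by
      intro n
      by_cases h : n < k <;> simp [h]; omega) (by intro n; simp)
    have h2 := hN (fun n => decide (k ≤ n)) (by intro n hn; simp; omega)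
    rw [hall, hfin] at h1
    rw [h1, map_add, map_sum, Real.dist_eq, sub_add_cancel_left, abs_neg]
    linarith
  obtain ⟨A, hAm, hAd, hAu, hAb⟩ := exists_partition ν f hfm
  have hAint : ∀ n (φ : X →L[ℝ] ℝ), IntegrableOn (fun ω => φ (f ω)) (A n) ν := by
    intro n φ
    refine Measure.integrableOn_of_bounded (M := (n + 1 : ℝ) * ‖φ‖) (measure_ne_top _ _)
      (hfm φ).aestronglyMeasurable ?_
    rw [ae_restrict_iff' (hAm n)]
    exact hAb n φ
  have hloc : ∀ n (B : Set Ω), MeasurableSet B → B ⊆ A n → ∀ φ : X →L[ℝ] ℝ,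
      φ (m B) = ∫ ω in B, φ (f ω) ∂ν := by
    intro n B hB hBA
    have hind : ∀ φ : X →L[ℝ] ℝ, (fun ω => φ ((A n).indicator f ω)) =
        (A n).indicator fun ω => φ (f ω) := by
      intro φ
      ext ω
      by_cases h : ω ∈ A n <;> simp [h]
    have hP := hPIP ((A n).indicator f) (fun φ => by
      rw [hind]
      exact (hfm φ).indicator (hAm n)) ⟨n + 1, by positivity, fun φ => by
        filter_upwards [hAb n φ] with ω hω
        by_cases h : ω ∈ A n
        · simpa [h] using hω h
        · simp only [h, not_false_eq_true, Set.indicator_of_notMem, map_zero, abs_zero]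
          positivity⟩
    obtain ⟨x, hx⟩ := hP.2 B hB
    have hx' : ∀ φ : X →L[ℝ] ℝ, φ x = ∫ ω in B, φ (f ω) ∂ν := by
      intro φ
      rw [hx φ]
      refine setIntegral_congr_fun hB fun ω hω => ?_
      simp [hBA hω]
    have : m B = x := huniq _ _ fun φ hφ => by rw [hm B hB φ hφ, hx' φ]
    rw [this]
    exact hx'
  have hpos : ∀ φ : X →L[ℝ] ℝ, IntegrableOn (fun ω => φ (f ω)) {ω | 0 ≤ φ (f ω)} ν := by
    intro φ
    have hPm : MeasurableSet {ω | 0 ≤ φ (f ω)} := measurableSet_le measurable_const (hfm φ)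
    let C : ℕ → Set Ω := fun n => A n ∩ {ω | 0 ≤ φ (f ω)}
    have hCm : ∀ n, MeasurableSet (C n) := fun n => (hAm n).inter hPm
    have hCd : Pairwise (Function.onFun Disjoint C) := fun i j hij =>
      (hAd hij).mono Set.inter_subset_left Set.inter_subset_left
    have hCu : (⋃ n, C n) = {ω | 0 ≤ φ (f ω)} := by
      rw [← Set.iUnion_inter, hAu, Set.univ_inter]
    have hval : ∀ n, φ (m (C n)) = ∫ ω in C n, ‖φ (f ω)‖ ∂ν := by
      intro n
      rw [hloc n (C n) (hCm n) Set.inter_subset_left φ]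
      refine setIntegral_congr_fun (hCm n) fun ω hω => ?_
      exact (Real.norm_of_nonneg hω.2).symm
    have ht := hca C hCm hCd φ
    rw [← hCu]
    refine integrableOn_iUnion_of_summable_integral_norm
      (fun n => (hAint n φ).mono_set Set.inter_subset_left) ?_
    simp only [hval] at ht
    exact ((hasSum_iff_tendsto_nat_of_nonneg
      (fun n => integral_nonneg fun ω => norm_nonneg _) _).2 ht).summable
  have hintg : ∀ φ : X →L[ℝ] ℝ, Integrable (fun ω => φ (f ω)) ν := by
    intro φ
    have h1 := hpos φ
    have h2 := (hpos (-φ)).neg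
    have h3 : IntegrableOn (fun ω => φ (f ω)) {ω | 0 ≤ (-φ) (f ω)} ν := by
      convert h2 using 1
      ext ω; simp
    have h4 := h1.union h3
    rw [← integrableOn_univ]
    convert h4 using 1
    ext ω
    simp [le_total]
  refine ⟨hintg, fun B hB => ⟨m B, fun φ => ?_⟩⟩
  let C : ℕ → Set Ω := fun n => A n ∩ B
  have hCm : ∀ n, MeasurableSet (C n) := fun n => (hAm n).inter hB
  have hCd : Pairwise (Function.onFun Disjoint C) := fun i j hij =>
    (hAd hij).mono Set.inter_subset_left Set.inter_subset_left
  have hCu : (⋃ n, C n) = B := by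
    rw [← Set.iUnion_inter, hAu, Set.univ_inter]
  have h1 := hca C hCm hCd φ
  have h2 := (hasSum_integral_iUnion hCm hCd (hintg φ).integrableOn).tendsto_sum_nat
  rw [hCu] at h1 h2
  refine tendsto_nhds_unique h1 ?_
  refine h2.congr fun N => Finset.sum_congr rfl fun n _ => ?_
  exact (hloc n (C n) (hCm n) Set.inter_subset_left φ).symm
end

section
/- Let (Ω,Σ,ν) be a complete probability space and X a real Banach space such that the dual X* has property (D) (with respect to total subsets of X**). Let Γ̃ ⊆ X** be a total linear subspace. Then every Γ̃-integrable function f : Ω → X* is Pettis integrable. -/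
open MeasureTheory Filter Topology

/-- A Borel finitely additive real set function on the subsets of `ℕ` is continuous at `∅`
along the tails. -/
lemma borel_additive_tail (κ : Set ℕ → ℝ)
    (hm : Measurable (fun s : ℕ → Bool => κ {i | s i = true}))
    (hadd : ∀ s t : Set ℕ, Disjoint s t → κ (s ∪ t) = κ s + κ t) :
    Tendsto (fun n => κ (Set.Ici n)) atTop (𝓝 0) := by
  classical
  rw [Metric.tendsto_atTop]
  intro ε' hε'
  set ε : ℝ := ε' / 10 with hε
  have hε0 : 0 < ε := by positivity
  set k : (ℕ → Bool) → ℝ := fun s => κ {i | s i = true} with hk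
  obtain ⟨c, hc⟩ : ∃ c : ℚ, ¬ IsMeagre (k ⁻¹' Metric.ball (c : ℝ) ε) := by
    by_contra! hcon
    have h1 : IsMeagre (⋃ c : ℚ, k ⁻¹' Metric.ball (c : ℝ) ε) := isMeagre_iUnion hcon
    have h2 : (⋃ c : ℚ, k ⁻¹' Metric.ball (c : ℝ) ε) = Set.univ := by
      ext s
      simp only [Set.mem_iUnion, Set.mem_preimage, Metric.mem_ball, Set.mem_univ, iff_true]
      obtain ⟨q, hq1, hq2⟩ := exists_rat_btwn (show k s - ε < k s by linarith)
      exact ⟨q, by rw [Real.dist_eq, abs_lt]; constructor <;> linarith⟩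
    rw [h2] at h1
    have : (∅ : Set (ℕ → Bool)) ∈ residual (ℕ → Bool) := by
      simpa [IsMeagre] using h1
    have hd := dense_of_mem_residual this
    simpa using hd.nonempty
  set F := k ⁻¹' Metric.ball (c : ℝ) ε with hF
  have hFm : MeasurableSet F := hm Metric.isOpen_ball.measurableSet
  obtain ⟨O, hO, hFO⟩ := hFm.residualEq_isOpen
  have hOne : O.Nonempty := by
    by_contra hne
    rw [Set.not_nonempty_iff_eq_empty] at hne
    apply hc
    rw [hne] at hFO
    unfold IsMeagre
    filter_upwards [hFO] with x hx
    intro hxF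
    have : (∅ : Set (ℕ → Bool)) x := by rw [← hx]; exact hxF
    exact this
  obtain ⟨x, hx⟩ := hOne
  obtain ⟨I, u, hI, hIsub⟩ := isOpen_pi_iff.1 hO x hx
  obtain ⟨n, hn⟩ : ∃ n, ∀ i ∈ I, i < n := ⟨I.sup id + 1, fun i hi =>
    Nat.lt_succ_of_le (Finset.le_sup (f := id) hi)⟩
  refine ⟨n, fun m hm => ?_⟩
  have key : ∀ g : Fin 3 → Bool, Function.Surjective g →
      ∀ᶠ w in residual (ℕ → Fin 3),
        (fun i => if i < m then x i else g (w i)) ∈ F := by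
    intro g hg
    set G : ∀ i : ℕ, Fin 3 → Bool := fun i => if i < m then fun _ => x i else g with hG
    have hopen : IsOpenMap (Pi.map G) := by
      apply IsOpenMap.piMap
      · intro i s hs
        exact isOpen_discrete _
      · rw [Nat.cofinite_eq_atTop]
        filter_upwards [eventually_ge_atTop m] with i hi
        simp only [hG, if_neg (not_lt.2 hi)]
        exact hg
    have hcont : Continuous (Pi.map G) := by
      apply Continuous.piMap
      intro i
      exact continuous_of_discreteTopology
    have ht := tendsto_residual_of_isOpenMap hcont hopen
    have := ht.eventually hFO
    filter_upwards [this] with w hw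
    have e : (fun i => if i < m then x i else g (w i)) = Pi.map G w := by
      funext i
      simp only [Pi.map, hG]
      split_ifs <;> rfl
    rw [e]
    have hmem : Pi.map G w ∈ O := by
      apply hIsub
      intro i hi
      have : i < m := lt_of_lt_of_le (hn i hi) hm
      simp only [Pi.map, hG, if_pos this]
      exact (hI i hi).2
    have : F (Pi.map G w) := by rw [hw]; exact hmem
    exact this
  obtain ⟨w, h0, h1, h01, h2⟩ : ∃ w : ℕ → Fin 3,
      (fun i => if i < m then x i else decide (w i = 0)) ∈ F ∧
      (fun i => if i < m then x i else decide (w i = 1)) ∈ F ∧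
      (fun i => if i < m then x i else decide (w i = 0 ∨ w i = 1)) ∈ F ∧
      (fun i => if i < m then x i else decide (w i = 2)) ∈ F := by
    have e0 := key (fun j => decide (j = 0)) (by decide)
    have e1 := key (fun j => decide (j = 1)) (by decide)
    have e01 := key (fun j => decide (j = 0 ∨ j = 1)) (by decide)
    have e2 := key (fun j => decide (j = 2)) (by decide)
    have e := (e0.and (e1.and (e01.and e2)))
    exact (dense_of_mem_residual e).nonempty
  set P : Set ℕ := {i | i < m ∧ x i = true} with hP
  set S : Fin 3 → Set ℕ := fun j => {i | m ≤ i ∧ w i = j} with hS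
  have hPS : ∀ j, Disjoint P (S j) := by
    intro j
    rw [Set.disjoint_left]
    rintro i ⟨hi, _⟩ ⟨hi', _⟩
    omega
  have hSS : ∀ j l, j ≠ l → Disjoint (S j) (S l) := by
    intro j l hjl
    rw [Set.disjoint_left]
    rintro i ⟨_, hi⟩ ⟨_, hi'⟩
    exact hjl (hi.symm.trans hi')
  have a0 : k (fun i => if i < m then x i else decide (w i = 0)) = κ P + κ (S 0) := by
    rw [← hadd _ _ (hPS 0)]
    simp only [hk]
    congr 1
    ext i
    by_cases h : i < m
    · simp [hP, hS, h]
    · simp [hP, hS, h, not_lt.1 h]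
  have a1 : k (fun i => if i < m then x i else decide (w i = 1)) = κ P + κ (S 1) := by
    rw [← hadd _ _ (hPS 1)]
    simp only [hk]
    congr 1
    ext i
    by_cases h : i < m
    · simp [hP, hS, h]
    · simp [hP, hS, h, not_lt.1 h]
  have a2 : k (fun i => if i < m then x i else decide (w i = 2)) = κ P + κ (S 2) := by
    rw [← hadd _ _ (hPS 2)]
    simp only [hk]
    congr 1
    ext i
    by_cases h : i < m
    · simp [hP, hS, h]
    · simp [hP, hS, h, not_lt.1 h]
  have a01 : k (fun i => if i < m then x i else decide (w i = 0 ∨ w i = 1))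
      = κ P + (κ (S 0) + κ (S 1)) := by
    rw [← hadd _ _ (hSS 0 1 (by decide)),
      ← hadd _ _ (Set.disjoint_union_right.2 ⟨hPS 0, hPS 1⟩)]
    simp only [hk]
    congr 1
    ext i
    by_cases h : i < m
    · simp [hP, hS, h]
    · simp [hP, hS, h, not_lt.1 h]
  have htot : κ (Set.Ici m) = (κ (S 0) + κ (S 1)) + κ (S 2) := by
    rw [← hadd _ _ (hSS 0 1 (by decide)),
      ← hadd _ _ (Set.disjoint_union_left.2 ⟨hSS 0 2 (by decide), hSS 1 2 (by decide)⟩)]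
    congr 1
    ext i
    have : w i = 0 ∨ w i = 1 ∨ w i = 2 := by
      generalize w i = j
      revert j
      decide
    simp only [Set.mem_Ici, hS, Set.mem_union, Set.mem_setOf_eq]
    tauto
  simp only [hF, Set.mem_preimage, Metric.mem_ball, Real.dist_eq] at h0 h1 h01 h2
  rw [a0, abs_lt] at h0
  rw [a1, abs_lt] at h1
  rw [a01, abs_lt] at h01
  rw [a2, abs_lt] at h2
  rw [Real.dist_eq, htot, sub_zero, abs_lt]
  have : ε' = 10 * ε := by rw [hε]; ring
  constructor <;> linarith

lemma sigmaGen_mono {E : Type*} [NormedAddCommGroup E] [NormedSpace ℝ E]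
    {Γ Δ : Set (E →L[ℝ] ℝ)} (h : Γ ⊆ Δ) : sigmaGen E Γ ≤ sigmaGen E Δ :=
  biSup_mono h

lemma measurable_sigmaGen {α E : Type*} [MeasurableSpace α] [NormedAddCommGroup E]
    [NormedSpace ℝ E] {Γ : Set (E →L[ℝ] ℝ)} {f : α → E}
    (h : ∀ φ ∈ Γ, Measurable (fun a => φ (f a))) : Measurable[_, sigmaGen E Γ] f := by
  rw [measurable_iff_comap_le, sigmaGen]
  simp only [MeasurableSpace.comap_iSup, MeasurableSpace.comap_comp, iSup_le_iff]
  intro φ hφ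
  exact measurable_iff_comap_le.1 (h φ hφ)

lemma measurable_of_mem_sigmaGen {E : Type*} [NormedAddCommGroup E] [NormedSpace ℝ E]
    {Γ : Set (E →L[ℝ] ℝ)} {φ : E →L[ℝ] ℝ} (h : φ ∈ Γ) :
    Measurable[sigmaGen E Γ] (fun x => φ x) := by
  rw [measurable_iff_comap_le, sigmaGen]
  exact le_iSup₂_of_le φ h le_rfl

/-- Sets in `σ(Γ)` depend on countably many elements of `Γ`. -/
lemma sigmaGen_countable {E : Type*} [NormedAddCommGroup E] [NormedSpace ℝ E]
    {Γ : Set (E →L[ℝ] ℝ)} {S : Set E} (hS : MeasurableSet[sigmaGen E Γ] S) :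
    ∃ D ⊆ Γ, D.Countable ∧ MeasurableSet[sigmaGen E D] S := by
  let M : MeasurableSpace E :=
    { MeasurableSet' := fun S => ∃ D ⊆ Γ, D.Countable ∧ MeasurableSet[sigmaGen E D] S
      measurableSet_empty := ⟨∅, Set.empty_subset _, Set.countable_empty,
        @MeasurableSet.empty _ (sigmaGen E ∅)⟩
      measurableSet_compl := by
        rintro s ⟨D, h1, h2, h3⟩
        exact ⟨D, h1, h2, h3.compl⟩
      measurableSet_iUnion := by
        intro s hs
        choose D h1 h2 h3 using hs
        refine ⟨⋃ n, D n, Set.iUnion_subset h1, Set.countable_iUnion h2, ?_⟩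
        exact MeasurableSet.iUnion
          (fun n => sigmaGen_mono (Set.subset_iUnion D n) _ (h3 n)) }
  have hle : sigmaGen E Γ ≤ M := by
    rw [sigmaGen]
    refine iSup₂_le fun φ hφ => ?_
    rintro s ⟨t, ht, rfl⟩
    exact ⟨{φ}, by simpa using hφ, Set.countable_singleton _,
      measurable_of_mem_sigmaGen (Set.mem_singleton φ) ht⟩
  exact hle S hS

lemma sigmaGen_le_comap {E : Type*} [NormedAddCommGroup E] [NormedSpace ℝ E]
    (D : Set (E →L[ℝ] ℝ)) :
    sigmaGen E D ≤ MeasurableSpace.comap (fun (x : E) (φ : D) => φ.1 x) MeasurableSpace.pi := by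
  rw [sigmaGen]
  refine iSup₂_le fun φ hφ => ?_
  rintro s ⟨t, ht, rfl⟩
  exact ⟨(fun g : D → ℝ => g ⟨φ, hφ⟩) ⁻¹' t, measurable_pi_apply _ ht, rfl⟩

lemma sigmaGen_depends {E : Type*} [NormedAddCommGroup E] [NormedSpace ℝ E]
    {D : Set (E →L[ℝ] ℝ)} {S : Set E} (hS : MeasurableSet[sigmaGen E D] S)
    {x y : E} (h : ∀ φ ∈ D, φ x = φ y) : x ∈ S ↔ y ∈ S := by
  obtain ⟨t, _, rfl⟩ := sigmaGen_le_comap D _ hS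
  have : (fun φ : D => φ.1 x) = (fun φ : D => φ.1 y) := by
    funext φ; exact h φ.1 φ.2
  simp only [Set.mem_preimage, this]

/-- A functional that is `σ(Γ)`-measurable is determined by countably many elements of `Γ`. -/
lemma functional_countable {E : Type*} [NormedAddCommGroup E] [NormedSpace ℝ E]
    {Γ : Set (E →L[ℝ] ℝ)} {η : E →L[ℝ] ℝ} (hη : Measurable[sigmaGen E Γ] (fun x => η x)) :
    ∃ D ⊆ Γ, D.Countable ∧ ∀ x y : E, (∀ φ ∈ D, φ x = φ y) → η x = η y := by
  have h : ∀ q : ℚ, MeasurableSet[sigmaGen E Γ] ((fun x => η x) ⁻¹' Set.Iio (q : ℝ)) :=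
    fun q => hη measurableSet_Iio
  choose D h1 h2 h3 using fun q => sigmaGen_countable (h q)
  refine ⟨⋃ q, D q, Set.iUnion_subset h1, Set.countable_iUnion h2, fun x y hxy => ?_⟩
  have hq : ∀ q : ℚ, η x < q ↔ η y < q := fun q =>
    sigmaGen_depends (h3 q) (fun φ hφ => hxy φ (Set.mem_iUnion.2 ⟨q, hφ⟩))
  by_contra hne
  rcases lt_or_gt_of_ne hne with h | h
  · obtain ⟨q, hq1, hq2⟩ := exists_rat_btwn h
    exact absurd ((hq q).1 hq1) (not_lt.2 hq2.le)
  · obtain ⟨q, hq1, hq2⟩ := exists_rat_btwn h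
    exact absurd ((hq q).2 hq1) (not_lt.2 hq2.le)

/-- Bounded countable approximation of a functional on the dual determined by countably many
points. -/
lemma bidual_approx {X : Type*} [NormedAddCommGroup X] [NormedSpace ℝ X]
    (η : (X →L[ℝ] ℝ) →L[ℝ] ℝ) (D : Set X) (hDc : D.Countable)
    (hD : ∀ y y' : X →L[ℝ] ℝ, (∀ d ∈ D, y d = y' d) → η y = η y') :
    ∃ Q : Set X, Q.Countable ∧ (∀ z ∈ Q, ‖z‖ ≤ ‖η‖ + 1) ∧
      ∀ T : Finset ((X →L[ℝ] ℝ) × ℝ), (∀ p ∈ T, η p.1 < p.2) →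
        ∃ z ∈ Q, ∀ p ∈ T, p.1 z < p.2 := by
  classical
  set W := Submodule.span ℝ D with hW
  set R := ‖η‖ + 1 with hR
  have hR0 : 0 < R := by positivity
  set S : Set X := {z | z ∈ W ∧ ‖z‖ ≤ R} with hS
  have hSsep : TopologicalSpace.IsSeparable S :=
    (hDc.isSeparable.span (R := ℝ)).mono (fun z hz => hz.1)
  obtain ⟨Q, hQS, hQc, hQd⟩ := hSsep.exists_countable_dense_subset
  refine ⟨Q, hQc, fun z hz => (hQS hz).2, fun T hT => ?_⟩
  set L : X →L[ℝ] (T → ℝ) := ContinuousLinearMap.pi (fun i : T => i.1.1) with hL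
  set O : Set (T → ℝ) := {v | ∀ i : T, v i < i.1.2} with hO
  have hOopen : IsOpen O := by
    have : O = ⋂ i : T, {v : T → ℝ | v i < i.1.2} := by ext; simp [hO]
    rw [this]
    exact isOpen_iInter_of_finite fun i => isOpen_lt (continuous_apply i) continuous_const
  have hOconv : Convex ℝ O := by
    intro v hv w hw s t hs ht hst i
    have h1 := hv i
    have h2 := hw i
    simp only [Pi.add_apply, Pi.smul_apply, smul_eq_mul]
    rcases eq_or_lt_of_le hs with h | h
    · have : t = 1 := by linarith
      subst h; subst this; simpa using h2
    · have e : i.1.2 = s * i.1.2 + t * i.1.2 := by rw [← add_mul, hst, one_mul]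
      rw [e]
      have := mul_lt_mul_of_pos_left h1 h
      have := mul_le_mul_of_nonneg_left h2.le ht
      linarith
  by_cases hmeet : ∃ z ∈ S, L z ∈ O
  · obtain ⟨z, hz, hzO⟩ := hmeet
    have hz' := hQd hz
    rw [mem_closure_iff] at hz'
    obtain ⟨q, hq1, hq2⟩ := hz' (L ⁻¹' O) (hOopen.preimage L.continuous) hzO
    exact ⟨q, hq2, fun p hp => hq1 ⟨p, hp⟩⟩
  exfalso
  have hSconv : Convex ℝ S := by
    have : S = (W : Set X) ∩ Metric.closedBall 0 R := by
      ext z; simp [hS]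
    rw [this]
    exact W.convex.inter (convex_closedBall _ _)
  have hS'conv : Convex ℝ (L '' S) := hSconv.linear_image L.toLinearMap
  have hdisj : Disjoint O (L '' S) := by
    rw [Set.disjoint_left]
    rintro v hv ⟨z, hz, rfl⟩
    exact hmeet ⟨z, hz, hv⟩
  obtain ⟨l, u, hl1, hl2⟩ := geometric_hahn_banach_open hOconv hOopen hS'conv hdisj
  set y : X →L[ℝ] ℝ := l.comp L with hy
  have hysum : y = ∑ i : T, l (Pi.single i 1) • i.1.1 := by
    ext z
    simp only [hy, ContinuousLinearMap.comp_apply, sum_apply,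
      smul_apply, smul_eq_mul]
    conv_lhs => rw [pi_eq_sum_univ' (L z)]
    rw [map_sum]
    refine Finset.sum_congr rfl fun i _ => ?_
    rw [map_smul, smul_eq_mul, mul_comm]
    rfl
  have hηy : η y = l (fun i : T => η i.1.1) := by
    rw [hysum, map_sum]
    conv_rhs => rw [pi_eq_sum_univ' (fun i : T => η i.1.1)]
    rw [map_sum]
    refine Finset.sum_congr rfl fun i _ => ?_
    rw [map_smul, map_smul, smul_eq_mul, smul_eq_mul, mul_comm]
  have h1 : η y < u := by
    rw [hηy]
    exact hl1 _ (fun i => hT i.1 i.2)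
  have h2 : ∀ z ∈ S, u ≤ y z := fun z hz => hl2 _ ⟨z, hz, rfl⟩
  have hu : u ≤ 0 := by
    have := h2 0 ⟨W.zero_mem, by simpa using hR0.le⟩
    simpa using this
  have hb : ∀ z ∈ W, ‖y z‖ ≤ (-u / R) * ‖z‖ := by
    intro z hz
    by_cases hz0 : z = 0
    · simp [hz0]
    have hzn : 0 < ‖z‖ := norm_pos_iff.2 hz0
    have hA := h2 ((R / ‖z‖) • z) ⟨W.smul_mem _ hz, by
      rw [norm_smul, Real.norm_eq_abs, abs_of_pos (by positivity)]
      field_simp; exact le_rfl⟩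
    have hB := h2 ((-(R / ‖z‖)) • z) ⟨W.smul_mem _ hz, by
      rw [norm_smul, norm_neg, Real.norm_eq_abs, abs_of_pos (by positivity)]
      field_simp; exact le_rfl⟩
    rw [map_smul, smul_eq_mul] at hA hB
    have e : y z = (‖z‖ / R) * (R / ‖z‖ * y z) := by field_simp
    have e2 : -u / R * ‖z‖ = (‖z‖ / R) * (-u) := by field_simp
    rw [Real.norm_eq_abs, e, e2, abs_mul, abs_of_pos (by positivity : 0 < ‖z‖ / R)]
    refine mul_le_mul_of_nonneg_left ?_ (by positivity)
    rw [abs_le]; constructor <;> linarith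
  obtain ⟨g, hg1, hg2⟩ := exists_extension_norm_eq W (y.comp W.subtypeL)
  have hgn : ‖g‖ ≤ -u / R := by
    rw [hg2]
    refine ContinuousLinearMap.opNorm_le_bound _ (div_nonneg (by linarith) hR0.le) ?_
    intro z
    exact hb z.1 z.2
  have hηg : η y = η g := by
    apply hD
    intro d hd
    exact (hg1 ⟨d, Submodule.subset_span hd⟩).symm
  have h3 : ‖η g‖ ≤ ‖η‖ * (-u / R) :=
    (η.le_opNorm g).trans (mul_le_mul_of_nonneg_left hgn (norm_nonneg _))
  have h4 : ‖η‖ * (-u / R) ≤ -u := by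
    rw [mul_div_assoc', div_le_iff₀ hR0, mul_comm]
    exact mul_le_mul_of_nonneg_left (by linarith) (by linarith)
  rw [← hηg, Real.norm_eq_abs] at h3
  have := neg_abs_le (η y)
  linarith

lemma total_range_inclusion {X : Type*} [NormedAddCommGroup X] [NormedSpace ℝ X] :
    IsTotalSet (X →L[ℝ] ℝ)
      (Set.range (fun x : X => ContinuousLinearMap.apply ℝ ℝ x)) := by
  intro y hy
  by_contra! h
  apply hy
  ext x
  exact h _ ⟨x, rfl⟩

/-- Under property (D) of the dual there is no bounded independent sequence. -/
lemma no_independent {X : Type*} [NormedAddCommGroup X] [NormedSpace ℝ X]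
    (hD : HasPropertyD (X →L[ℝ] ℝ)) (z : ℕ → X) (R : ℝ) (hz : ∀ n, ‖z n‖ ≤ R)
    (M a b : ℝ) (hab : a < b)
    (h : ∀ (s : ℕ → Bool) (n : ℕ), ∃ y : X →L[ℝ] ℝ, ‖y‖ ≤ M ∧
      ∀ i < n, (s i = false → y (z i) ≤ a) ∧ (s i = true → b ≤ y (z i))) : False := by
  classical
  set U : Ultrafilter ℕ := hyperfilter ℕ with hU
  -- the limit functional
  obtain ⟨ζ, hζ⟩ : ∃ ζ : (X →L[ℝ] ℝ) →L[ℝ] ℝ,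
      ∀ y : X →L[ℝ] ℝ, Tendsto (fun n => y (z n)) U (𝓝 (ζ y)) := by
    set w : ℕ → WeakDual ℝ (X →L[ℝ] ℝ) :=
      fun n => StrongDual.toWeakDual (ContinuousLinearMap.apply ℝ ℝ (z n)) with hw
    have hcomp := WeakDual.isCompact_closedBall (𝕜 := ℝ) (E := X →L[ℝ] ℝ) 0 R
    have hmem : ∀ n, w n ∈ WeakDual.toStrongDual ⁻¹'
        Metric.closedBall (0 : StrongDual ℝ (X →L[ℝ] ℝ)) R := by
      intro n
      refine (mem_closedBall_zero_iff (E := StrongDual ℝ (X →L[ℝ] ℝ))).2 ?_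
      refine ContinuousLinearMap.opNorm_le_bound _ ((norm_nonneg _).trans (hz n)) fun y => ?_
      calc ‖y (z n)‖ ≤ ‖y‖ * ‖z n‖ := y.le_opNorm _
        _ ≤ R * ‖y‖ := by rw [mul_comm]; exact mul_le_mul_of_nonneg_right (hz n) (norm_nonneg _)
    obtain ⟨ζ, _, hζ⟩ := hcomp.ultrafilter_le_nhds (U.map w) (by
      rw [Ultrafilter.coe_map, Filter.le_principal_iff, Filter.mem_map]
      exact Filter.univ_mem' hmem)
    refine ⟨WeakDual.toStrongDual ζ, fun y => ?_⟩
    have hc := (WeakDual.eval_continuous (𝕜 := ℝ) y).tendsto ζ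
    exact hc.comp (f := w) hζ
  set c := (a + b) / 2 with hc
  have hac : a < c := by rw [hc]; linarith
  have hcb : c < b := by rw [hc]; linarith
  set ι : X → ((X →L[ℝ] ℝ) →L[ℝ] ℝ) := fun x => ContinuousLinearMap.apply ℝ ℝ x with hι
  have hSm : MeasurableSet[sigmaGen (X →L[ℝ] ℝ) (Set.range ι)]
      ((fun y => ζ y) ⁻¹' Set.Iio c) := by
    rw [hD _ total_range_inclusion]
    exact measurable_of_mem_sigmaGen (Set.mem_univ ζ) measurableSet_Iio
  obtain ⟨D₀, hD₀, hD₀c, hD₀m⟩ := sigmaGen_countable hSm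
  set D : Set ((X →L[ℝ] ℝ) →L[ℝ] ℝ) := D₀ ∪ Set.range (fun n => ι (z n)) with hDdef
  have hDc : D.Countable := hD₀c.union (Set.countable_range _)
  have : Countable D := hDc.to_subtype
  have hDr : ∀ φ ∈ D, ∃ x, ι x = φ := by
    rintro φ (hφ | ⟨n, rfl⟩)
    · exact hD₀ hφ
    · exact ⟨z n, rfl⟩
  obtain ⟨S', hS'm, hS'⟩ := sigmaGen_le_comap D _
    (sigmaGen_mono Set.subset_union_left _ hD₀m)
  set T : WeakDual ℝ X → (D → ℝ) := fun y φ => φ.1 (WeakDual.toStrongDual y) with hT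
  have hTc : Continuous T := by
    refine continuous_pi fun φ => ?_
    obtain ⟨x, hx⟩ := hDr φ.1 φ.2
    have : (fun y : WeakDual ℝ X => T y φ) = fun y => y x := by
      funext y
      simp only [hT, ← hx]
      rfl
    rw [this]
    exact WeakDual.eval_continuous x
  have hTS : ∀ y : WeakDual ℝ X, T y ∈ S' ↔ ζ (WeakDual.toStrongDual y) < c := by
    intro y
    have : WeakDual.toStrongDual y ∈ (fun y => ζ y) ⁻¹' Set.Iio c ↔ T y ∈ S' := by
      rw [← hS']; rfl
    rw [← this]; rfl
  set ball : Set (WeakDual ℝ X) := WeakDual.toStrongDual ⁻¹' Metric.closedBall 0 M with hball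
  have hballc : IsCompact ball := WeakDual.isCompact_closedBall (𝕜 := ℝ) (E := X) 0 M
  have hballcl : IsClosed ball := WeakDual.isClosed_closedBall (𝕜 := ℝ) (E := X) 0 M
  set K : Set (WeakDual ℝ X) := ball ∩ ⋂ i, {y | y (z i) ≤ a ∨ b ≤ y (z i)} with hK
  have hKc : IsCompact K := by
    refine hballc.inter_right (isClosed_iInter fun i => ?_)
    exact (isClosed_le (WeakDual.eval_continuous _) continuous_const).union
      (isClosed_le continuous_const (WeakDual.eval_continuous _))
  have hKm : MeasurableSet (T '' K) := (hKc.image hTc).isClosed.measurableSet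
  have hmemD : ∀ i, ι (z i) ∈ D := fun i => Or.inr ⟨i, rfl⟩
  set p : (D → ℝ) → (ℕ → Bool) := fun g i => decide (c < g ⟨ι (z i), hmemD i⟩) with hp
  have hpm : Measurable p := by
    refine measurable_pi_lambda _ fun i => ?_
    refine measurable_to_bool ?_
    have : (fun g : D → ℝ => p g i) ⁻¹' {true} = {g | c < g ⟨ι (z i), hmemD i⟩} := by
      ext g
      simp [hp]
    rw [this]
    exact measurableSet_lt measurable_const (measurable_pi_apply _)
  have hpT : ∀ y i, p (T y) i = decide (c < y (z i)) := fun y i => rfl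
  set V : Set (ℕ → Bool) := {s | ∀ᶠ i in (U : Filter ℕ), s i = true} with hV
  have hKV : ∀ y ∈ K, (T y ∈ S' ↔ p (T y) ∉ V) := by
    intro y hy
    have hy2 : ∀ i, y (z i) ≤ a ∨ b ≤ y (z i) := by simpa using hy.2
    rw [hTS]
    constructor
    · intro hlt hmem
      have hlim := hζ (WeakDual.toStrongDual y)
      have : b ≤ ζ (WeakDual.toStrongDual y) := by
        refine ge_of_tendsto hlim ?_
        filter_upwards [hmem] with i hi
        rw [hpT, decide_eq_true_eq] at hi
        rcases hy2 i with h' | h'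
        · linarith
        · exact h'
      linarith
    · intro hmem
      have hmem' : ∀ᶠ i in (U : Filter ℕ), ¬ (p (T y) i = true) := by
        rw [Ultrafilter.eventually_not]
        exact hmem
      have hlim := hζ (WeakDual.toStrongDual y)
      have : ζ (WeakDual.toStrongDual y) ≤ a := by
        refine le_of_tendsto hlim ?_
        filter_upwards [hmem'] with i hi
        rw [hpT, decide_eq_true_eq] at hi
        rcases hy2 i with h' | h'
        · exact h'
        · exact absurd (lt_of_lt_of_le hcb h') hi
      linarith
  have hsurj : ∀ s : ℕ → Bool, ∃ y ∈ K, p (T y) = s := by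
    intro s
    set C : ℕ → Set (WeakDual ℝ X) := fun n => ball ∩ ⋂ i, ⋂ (_ : i < n),
      {y | (s i = false → y (z i) ≤ a) ∧ (s i = true → b ≤ y (z i))} with hC
    have hCcl : ∀ n, IsClosed (C n) := by
      intro n
      refine hballcl.inter (isClosed_iInter fun i => isClosed_iInter fun _ => ?_)
      cases hsi : s i
      · simpa using isClosed_le (WeakDual.eval_continuous (z i)) continuous_const
      · simpa using isClosed_le continuous_const (WeakDual.eval_continuous (z i))
    have hne := IsCompact.nonempty_iInter_of_sequence_nonempty_isCompact_isClosed C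
      (by
        intro n y hy
        refine ⟨hy.1, ?_⟩
        have := hy.2
        simp only [Set.mem_iInter] at this ⊢
        intro i hi
        exact this i (by omega))
      (by
        intro n
        obtain ⟨y, hy1, hy2⟩ := h s n
        refine ⟨StrongDual.toWeakDual y, ?_, ?_⟩
        · simpa [hball] using hy1
        · simp only [Set.mem_iInter]
          intro i hi
          exact hy2 i hi)
      (hballc.of_isClosed_subset (hCcl 0) Set.inter_subset_left) hCcl
    obtain ⟨y, hy⟩ := hne
    have hyC : ∀ n, y ∈ C n := by simpa using hy
    have hyi : ∀ i, (s i = false → y (z i) ≤ a) ∧ (s i = true → b ≤ y (z i)) := by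
      intro i
      have := (hyC (i + 1)).2
      simp only [Set.mem_iInter] at this
      exact this i (by omega)
    refine ⟨y, ⟨(hyC 0).1, ?_⟩, ?_⟩
    · simp only [Set.mem_iInter]
      intro i
      cases hsi : s i
      · exact Or.inl ((hyi i).1 hsi)
      · exact Or.inr ((hyi i).2 hsi)
    · funext i
      rw [hpT]
      cases hsi : s i
      · have := (hyi i).1 hsi
        simp only [decide_eq_false_iff_not, not_lt]
        linarith
      · have := (hyi i).2 hsi
        simp only [decide_eq_true_eq]
        linarith
  have e1 : p '' (T '' K ∩ S'ᶜ) = V := by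
    ext s
    constructor
    · rintro ⟨_, ⟨⟨y, hy, rfl⟩, hyS⟩, rfl⟩
      by_contra hcon
      exact hyS ((hKV y hy).2 hcon)
    · intro hs
      obtain ⟨y, hy, rfl⟩ := hsurj s
      exact ⟨T y, ⟨⟨y, hy, rfl⟩, fun hyS => (hKV y hy).1 hyS hs⟩, rfl⟩
  have e2 : p '' (T '' K ∩ S') = Vᶜ := by
    ext s
    constructor
    · rintro ⟨_, ⟨⟨y, hy, rfl⟩, hyS⟩, rfl⟩
      exact (hKV y hy).1 hyS
    · intro hs
      obtain ⟨y, hy, rfl⟩ := hsurj s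
      exact ⟨T y, ⟨⟨y, hy, rfl⟩, (hKV y hy).2 hs⟩, rfl⟩
  have hVm : MeasurableSet V := by
    refine AnalyticSet.measurableSet_of_compl ?_ ?_
    · rw [← e1]
      exact (hKm.inter hS'm.compl).analyticSet_image hpm
    · rw [← e2]
      exact (hKm.inter hS'm).analyticSet_image hpm
  -- an ultrafilter is not Borel
  have htail := borel_additive_tail (fun s => if s ∈ U then 1 else 0)
    (Measurable.ite (p := fun s : ℕ → Bool => {i | s i = true} ∈ U) hVm
      measurable_const measurable_const)
    (by
      intro s t hst
      by_cases hs : s ∈ U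
      · have ht : t ∉ U := by
          intro ht
          have := U.inter_mem hs ht
          rw [hst.inter_eq] at this
          exact U.empty_notMem this
        simp [hs, ht, Ultrafilter.union_mem_iff]
      · by_cases ht : t ∈ U <;> simp [hs, ht, Ultrafilter.union_mem_iff])
  have h1 : ∀ n, Set.Ici n ∈ U := by
    intro n
    have : Set.Ici n ∈ (cofinite : Filter ℕ) := by
      rw [Nat.cofinite_eq_atTop]
      exact Ici_mem_atTop n
    exact hyperfilter_le_cofinite this
  simp only [h1, if_true] at htail
  have := tendsto_nhds_unique htail tendsto_const_nhds
  norm_num at this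

lemma IsTotalSet.eq_of_forall {E : Type*} [NormedAddCommGroup E] [NormedSpace ℝ E]
    {Γ : Set (E →L[ℝ] ℝ)} (hΓ : IsTotalSet E Γ) {x y : E} (h : ∀ ξ ∈ Γ, ξ x = ξ y) :
    x = y := by
  by_contra hne
  obtain ⟨ξ, hξ, hξ0⟩ := hΓ (x - y) (sub_ne_zero.2 hne)
  rw [map_sub, h ξ hξ, sub_self] at hξ0
  exact hξ0 rfl

/-- Under property (D), the indefinite `Γ`-integral is weakly countably additive and
has scalar densities. -/
lemma exists_density {Ω E : Type*} [MeasurableSpace Ω] [NormedAddCommGroup E] [NormedSpace ℝ E]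
    (hD : HasPropertyD E) (ν : Measure Ω) [IsFiniteMeasure ν]
    {Γ : Set (E →L[ℝ] ℝ)} (hΓ : IsTotalSet E Γ) (f : Ω → E)
    (hscal : ∀ ξ ∈ Γ, Integrable (fun ω => ξ (f ω)) ν) (m : Set Ω → E)
    (hm : ∀ A, MeasurableSet A → ∀ ξ ∈ Γ, ξ (m A) = ∫ ω in A, ξ (f ω) ∂ν)
    (η : E →L[ℝ] ℝ) :
    ∃ g : Ω → ℝ, Measurable g ∧ Integrable g ν ∧
      ∀ A, MeasurableSet A → η (m A) = ∫ ω in A, g ω ∂ν := by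
  classical
  have hadd : ∀ A B, MeasurableSet A → MeasurableSet B → Disjoint A B →
      m (A ∪ B) = m A + m B := by
    intro A B hA hB hAB
    refine hΓ.eq_of_forall fun ξ hξ => ?_
    rw [map_add, hm _ (hA.union hB) ξ hξ, hm _ hA ξ hξ, hm _ hB ξ hξ,
      setIntegral_union hAB hB (hscal ξ hξ).integrableOn (hscal ξ hξ).integrableOn]
  have hnull : ∀ A, MeasurableSet A → ν A = 0 → m A = 0 := by
    intro A hA h0
    refine hΓ.eq_of_forall fun ξ hξ => ?_
    rw [hm _ hA ξ hξ, map_zero, setIntegral_measure_zero _ h0]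
  have hempty : m ∅ = 0 := hnull _ MeasurableSet.empty measure_empty
  have htail : ∀ A : ℕ → Set Ω, (∀ i, MeasurableSet (A i)) → Pairwise (Function.onFun Disjoint A) →
      Tendsto (fun n => η (m (⋃ i ∈ Set.Ici n, A i))) atTop (𝓝 0) := by
    intro A hA hd
    refine borel_additive_tail (fun s => η (m (⋃ i ∈ s, A i))) ?_ ?_
    · have h1 : Measurable[_, sigmaGen E Γ]
          (fun s : ℕ → Bool => m (⋃ i ∈ {i | s i = true}, A i)) := by
        refine measurable_sigmaGen fun ξ hξ => ?_
        refine measurable_of_tendsto_metrizable (f := fun n (s : ℕ → Bool) =>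
          ∑ i ∈ Finset.range n, if s i = true then ∫ ω in A i, ξ (f ω) ∂ν else 0) ?_ ?_
        · intro n
          refine Finset.measurable_sum _ fun i _ => ?_
          refine Measurable.ite ?_ measurable_const measurable_const
          have hpi : Measurable (fun s : ℕ → Bool => s i) := measurable_pi_apply i
          exact hpi (measurableSet_singleton true)
        · rw [tendsto_pi_nhds]
          intro s
          set B : ℕ → Set Ω := fun i => if s i = true then A i else ∅ with hB
          have hBm : ∀ i, MeasurableSet (B i) := by
            intro i
            simp only [hB]
            split_ifs
            exacts [hA i, MeasurableSet.empty]
          have hBsub : ∀ i, B i ⊆ A i := by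
            intro i
            simp only [hB]
            split_ifs
            exacts [le_rfl, Set.empty_subset _]
          have hBU : (⋃ i ∈ {i | s i = true}, A i) = ⋃ i, B i := by
            ext ω
            simp only [Set.mem_iUnion, hB]
            constructor
            · rintro ⟨i, hi, hω⟩
              have hi' : s i = true := hi
              exact ⟨i, by simpa [hi'] using hω⟩
            · rintro ⟨i, hω⟩
              by_cases hi : s i = true
              · exact ⟨i, hi, by simpa [hi] using hω⟩
              · simp [hi] at hω
          have hs := hasSum_integral_iUnion (f := fun ω => ξ (f ω)) (μ := ν) hBm
            (fun i j hij => (hd hij).mono (hBsub i) (hBsub j)) (hscal ξ hξ).integrableOn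
          have ht := hs.tendsto_sum_nat
          rw [hBU, hm _ (MeasurableSet.iUnion hBm) ξ hξ]
          refine ht.congr fun n => Finset.sum_congr rfl fun i _ => ?_
          simp only [hB]
          split_ifs <;> simp
      rw [hD Γ hΓ] at h1
      exact (measurable_of_mem_sigmaGen (Set.mem_univ η)).comp h1
    · intro s t hst
      have hm' : ∀ s : Set ℕ, MeasurableSet (⋃ i ∈ s, A i) := fun s =>
        MeasurableSet.biUnion s.to_countable fun i _ => hA i
      rw [Set.biUnion_union, hadd _ _ (hm' s) (hm' t), map_add]
      rw [Set.disjoint_left]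
      intro ω h1 h2
      simp only [Set.mem_iUnion] at h1 h2
      obtain ⟨i, hi, hωi⟩ := h1
      obtain ⟨j, hj, hωj⟩ := h2
      have hij : i ≠ j := by
        rintro rfl
        exact Set.disjoint_left.1 hst hi hj
      exact Set.disjoint_left.1 (hd hij) hωi hωj
  have htend : ∀ A : ℕ → Set Ω, (∀ i, MeasurableSet (A i)) → Pairwise (Function.onFun Disjoint A) →
      Tendsto (fun n => ∑ i ∈ Finset.range n, η (m (A i))) atTop (𝓝 (η (m (⋃ i, A i)))) := by
    intro A hA hd
    have hstep : ∀ n, ∑ i ∈ Finset.range n, η (m (A i))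
        = η (m (⋃ i, A i)) - η (m (⋃ i ∈ Set.Ici n, A i)) := by
      intro n
      induction n with
      | zero => simp
      | succ n ih =>
        have e : (⋃ i ∈ Set.Ici n, A i) = A n ∪ ⋃ i ∈ Set.Ici (n + 1), A i := by
          ext ω
          simp only [Set.mem_iUnion, Set.mem_Ici, Set.mem_union, exists_prop]
          constructor
          · rintro ⟨i, hi, hω⟩
            rcases eq_or_lt_of_le hi with h | h
            · subst h; exact Or.inl hω
            · exact Or.inr ⟨i, h, hω⟩
          · rintro (hω | ⟨i, hi, hω⟩)
            · exact ⟨n, le_rfl, hω⟩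
            · exact ⟨i, by omega, hω⟩
        have hdis : Disjoint (A n) (⋃ i ∈ Set.Ici (n + 1), A i) := by
          rw [Set.disjoint_left]
          intro ω h1 h2
          simp only [Set.mem_iUnion, Set.mem_Ici, exists_prop] at h2
          obtain ⟨j, hj, hωj⟩ := h2
          exact Set.disjoint_left.1 (hd (show n ≠ j by omega)) h1 hωj
        rw [Finset.sum_range_succ, ih, e, hadd _ _ (hA n)
          (MeasurableSet.biUnion (Set.to_countable _) fun i _ => hA i) hdis, map_add]
        ring
    have := (htail A hA hd).const_sub (η (m (⋃ i, A i)))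
    rw [sub_zero] at this
    exact this.congr fun n => (hstep n).symm
  have hsum : ∀ A : ℕ → Set Ω, (∀ i, MeasurableSet (A i)) → Pairwise (Function.onFun Disjoint A) →
      HasSum (fun i => η (m (A i))) (η (m (⋃ i, A i))) := by
    intro A hA hd
    have sub : ∀ (P : ℕ → Prop) [DecidablePred P], Tendsto
        (fun n => ∑ i ∈ Finset.range n, if P i then η (m (A i)) else 0) atTop
        (𝓝 (η (m (⋃ i, if P i then A i else ∅)))) := by
      intro P _
      have hsub : ∀ i, (if P i then A i else ∅) ⊆ A i := by
        intro i
        split_ifs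
        exacts [le_rfl, Set.empty_subset _]
      have := htend (fun i => if P i then A i else ∅)
        (by intro i; split_ifs; exacts [hA i, MeasurableSet.empty])
        (fun i j hij => (hd hij).mono (hsub i) (hsub j))
      refine this.congr fun n => Finset.sum_congr rfl fun i _ => ?_
      split_ifs <;> simp [hempty]
    have hp := (hasSum_iff_tendsto_nat_of_nonneg (fun i => by split_ifs with h; exacts [h, le_rfl])
      _).2 (sub (fun i => 0 ≤ η (m (A i))))
    have hn := (hasSum_iff_tendsto_nat_of_nonneg
      (f := fun i => -(if ¬ 0 ≤ η (m (A i)) then η (m (A i)) else 0))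
      (fun i => by
        split_ifs with h
        · simp
        · simp only [not_le] at h; linarith)
      (-(η (m (⋃ i, if ¬ 0 ≤ η (m (A i)) then A i else ∅))))).2 (by
        simp only [Finset.sum_neg_distrib]
        exact (sub (fun i => ¬ 0 ≤ η (m (A i)))).neg)
    have hs : Summable (fun i => η (m (A i))) := by
      refine (hp.summable.sub hn.summable).congr fun i => ?_
      by_cases h : 0 ≤ η (m (A i))
      · simp [h]
      · simp [h]
    have := tendsto_nhds_unique hs.hasSum.tendsto_sum_nat (htend A hA hd)
    rw [← this]
    exact hs.hasSum
  let s : SignedMeasure Ω :=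
    { measureOf' := fun A => if MeasurableSet A then η (m A) else 0
      empty' := by simp [hempty]
      not_measurable' := fun A hA => by simp [hA]
      m_iUnion' := fun A hA hd => by
        simpa [hA, MeasurableSet.iUnion hA] using hsum A hA hd }
  have hsA : ∀ A, MeasurableSet A → s A = η (m A) := fun A hA => if_pos hA
  have hac : s ≪ᵥ ν.toENNRealVectorMeasure := by
    refine VectorMeasure.AbsolutelyContinuous.mk fun A hA h0 => ?_
    rw [Measure.toENNRealVectorMeasure_apply_measurable hA] at h0
    rw [hsA A hA, hnull A hA h0, map_zero]
  have hrn := (SignedMeasure.absolutelyContinuous_iff_withDensityᵥ_rnDeriv_eq s ν).1 hac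
  refine ⟨s.rnDeriv ν, SignedMeasure.measurable_rnDeriv s ν,
    SignedMeasure.integrable_rnDeriv s ν, fun A hA => ?_⟩
  rw [← withDensityᵥ_apply (SignedMeasure.integrable_rnDeriv s ν) hA, hrn, hsA A hA]

lemma mul_lt_setIntegral {Ω : Type*} [MeasurableSpace Ω] {ν : Measure Ω} [IsFiniteMeasure ν]
    {A : Set Ω} (hA : MeasurableSet A) (h0 : ν A ≠ 0) {g : Ω → ℝ} (hg : IntegrableOn g A ν)
    {b : ℝ} (hb : ∀ ω ∈ A, b < g ω) : b * ν.real A < ∫ ω in A, g ω ∂ν := by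
  have hc : IntegrableOn (fun _ : Ω => b) A ν := integrableOn_const (measure_ne_top _ _)
  have hpos : 0 < ∫ ω in A, (g ω - b) ∂ν := by
    rw [setIntegral_pos_iff_support_of_nonneg_ae]
    · have : Function.support (fun ω => g ω - b) ∩ A = A := by
        rw [Set.inter_eq_right]
        intro ω hω
        exact (sub_pos.2 (hb ω hω)).ne'
      rw [this]
      exact pos_iff_ne_zero.2 h0
    · exact (ae_restrict_iff' hA).2 (ae_of_all _ fun ω hω => (sub_pos.2 (hb ω hω)).le)
    · exact hg.sub hc
  rw [integral_sub hg hc, setIntegral_const, smul_eq_mul] at hpos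
  linarith

/-- The key independence argument. -/
lemma gap_null {Ω X : Type*} [MeasurableSpace Ω] [NormedAddCommGroup X] [NormedSpace ℝ X]
    (hD : HasPropertyD (X →L[ℝ] ℝ)) (ν : Measure Ω) [IsFiniteMeasure ν]
    (f : Ω → (X →L[ℝ] ℝ)) (hf : ∀ η : (X →L[ℝ] ℝ) →L[ℝ] ℝ, Measurable (fun ω => η (f ω)))
    (H B : Set Ω) (M : ℝ) (hH : MeasurableSet H) (hB : ∀ ω ∈ B, ‖f ω‖ ≤ M)
    (hHB : ∀ A, MeasurableSet A → A ⊆ H → ν A ≠ 0 → (A ∩ B).Nonempty)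
    (G : Set Ω → (X →L[ℝ] ℝ))
    (hGi : ∀ x : X, IntegrableOn (fun ω => f ω x) H ν)
    (hG : ∀ A, MeasurableSet A → A ⊆ H → ∀ x : X, G A x = ∫ ω in A, f ω x ∂ν)
    (η : (X →L[ℝ] ℝ) →L[ℝ] ℝ) (g : Ω → ℝ) (hgm : Measurable g) (hgi : Integrable g ν)
    (hη : ∀ A, MeasurableSet A → A ⊆ H → η (G A) = ∫ ω in A, g ω ∂ν)
    (a b : ℝ) (hab : a < b) :
    ν {ω | ω ∈ H ∧ η (f ω) < a ∧ b < g ω} = 0 := by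
  classical
  by_contra hE0
  set E : Set Ω := {ω | ω ∈ H ∧ η (f ω) < a ∧ b < g ω} with hE
  have hEm : MeasurableSet E :=
    hH.inter ((measurableSet_lt (hf η) measurable_const).inter
      (measurableSet_lt measurable_const hgm))
  have hEH : E ⊆ H := fun ω hω => hω.1
  have hfx : ∀ x : X, Measurable (fun ω => f ω x) := fun x =>
    hf (ContinuousLinearMap.apply ℝ ℝ x)
  -- countable approximation
  have hηm : Measurable[sigmaGen (X →L[ℝ] ℝ)
      (Set.range (fun x : X => ContinuousLinearMap.apply ℝ ℝ x))] (fun y => η y) := by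
    rw [hD _ total_range_inclusion]
    exact measurable_of_mem_sigmaGen (Set.mem_univ η)
  obtain ⟨D, hDr, hDc, hDη⟩ := functional_countable hηm
  have hDr' : ∀ φ : (X →L[ℝ] ℝ) →L[ℝ] ℝ, φ ∈ D → ∃ x : X, ∀ y : X →L[ℝ] ℝ, φ y = y x := by
    intro φ hφ
    obtain ⟨x, hx⟩ := hDr hφ
    refine ⟨x, fun y => ?_⟩
    rw [← hx]
    rfl
  choose! r hr using hDr'
  obtain ⟨Q, hQc, hQb, hQ⟩ := bidual_approx η (r '' D) (hDc.image r) (by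
    intro y y' hyy
    refine hDη y y' fun φ hφ => ?_
    have := hyy (r φ) ⟨φ, hφ, rfl⟩
    rw [hr φ hφ, hr φ hφ]
    exact this)
  -- good families
  let good : Finset (Set Ω) → Prop := fun 𝒜 => ∀ A ∈ 𝒜, MeasurableSet A ∧ A ⊆ E ∧ ν A ≠ 0
  have hstep : ∀ 𝒜 : {𝒜 : Finset (Set Ω) // good 𝒜}, ∃ z ∈ Q, ∀ A ∈ 𝒜.1,
      ν (A ∩ {ω | f ω z < a}) ≠ 0 ∧ ν (A ∩ {ω | b < f ω z}) ≠ 0 := by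
    rintro ⟨𝒜, h𝒜⟩
    have ht : ∀ A : Set Ω, ∃ t : Ω, A ∈ 𝒜 → t ∈ A ∧
        ∀ z ∈ Q, f t z < a → ν (A ∩ {ω | f ω z < a}) ≠ 0 := by
      intro A
      by_cases hA : A ∈ 𝒜
      · by_contra! hcon
        apply (h𝒜 A hA).2.2
        have hsub : A ⊆ ⋃ z ∈ {z ∈ Q | ν (A ∩ {ω | f ω z < a}) = 0}, A ∩ {ω | f ω z < a} := by
          intro t htA
          obtain ⟨z, hzQ, hz1, hz2⟩ := (hcon t).2 htA
          simp only [Set.mem_iUnion]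
          exact ⟨z, ⟨hzQ, hz2⟩, htA, hz1⟩
        refine measure_mono_null hsub ?_
        rw [measure_biUnion_null_iff (hQc.mono (Set.sep_subset _ _))]
        exact fun z hz => hz.2
      · obtain ⟨t, _⟩ : E.Nonempty := nonempty_of_measure_ne_zero hE0
        exact ⟨t, fun h => absurd h hA⟩
    choose t ht using ht
    obtain ⟨z, hzQ, hz⟩ := hQ
      (𝒜.image (fun A => (f (t A), a)) ∪ 𝒜.image (fun A => (-G A, -(b * ν.real A)))) (by
        intro p hp
        rw [Finset.mem_union, Finset.mem_image, Finset.mem_image] at hp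
        rcases hp with ⟨A, hA, rfl⟩ | ⟨A, hA, rfl⟩
        · exact ((h𝒜 A hA).2.1 (ht A hA).1).2.1
        · obtain ⟨h1, h2, h3⟩ := h𝒜 A hA
          simp only [map_neg, neg_lt_neg_iff]
          rw [hη A h1 (h2.trans hEH)]
          exact mul_lt_setIntegral h1 h3 hgi.integrableOn fun ω hω => (h2 hω).2.2)
    refine ⟨z, hzQ, fun A hA => ⟨?_, ?_⟩⟩
    · refine (ht A hA).2 z hzQ ?_
      exact hz (f (t A), a) (Finset.mem_union_left _ (Finset.mem_image_of_mem _ hA))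
    · intro h0
      obtain ⟨h1, h2, h3⟩ := h𝒜 A hA
      have hzA : -(G A z) < -(b * ν.real A) :=
        hz (-G A, -(b * ν.real A)) (Finset.mem_union_right _
          (Finset.mem_image_of_mem (fun A => (-G A, -(b * ν.real A))) hA))
      rw [hG A h1 (h2.trans hEH), neg_lt_neg_iff] at hzA
      have hle : ∫ ω in A, f ω z ∂ν ≤ ∫ _ in A, b ∂ν := by
        refine integral_mono_ae ((hGi z).mono_set (h2.trans hEH))
          (integrableOn_const (measure_ne_top _ _)) ?_
        refine (ae_restrict_iff' h1).2 ?_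
        have : ∀ᵐ ω ∂ν, ω ∉ A ∩ {ω | b < f ω z} := measure_eq_zero_iff_ae_notMem.1 h0
        filter_upwards [this] with ω hω hωA
        by_contra hlt
        exact hω ⟨hωA, not_le.1 hlt⟩
      rw [setIntegral_const, smul_eq_mul, mul_comm] at hle
      linarith
  choose zf hzfQ hzf using hstep
  let next : {𝒜 : Finset (Set Ω) // good 𝒜} → {𝒜 : Finset (Set Ω) // good 𝒜} := fun 𝒜 =>
    ⟨𝒜.1.image (fun A => A ∩ {ω | f ω (zf 𝒜) < a}) ∪
      𝒜.1.image (fun A => A ∩ {ω | b < f ω (zf 𝒜)}), by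
      intro A hA
      rw [Finset.mem_union, Finset.mem_image, Finset.mem_image] at hA
      rcases hA with ⟨A, hA, rfl⟩ | ⟨A, hA, rfl⟩
      · obtain ⟨h1, h2, h3⟩ := 𝒜.2 A hA
        exact ⟨h1.inter (measurableSet_lt (hfx _) measurable_const),
          Set.inter_subset_left.trans h2, (hzf 𝒜 A hA).1⟩
      · obtain ⟨h1, h2, h3⟩ := 𝒜.2 A hA
        exact ⟨h1.inter (measurableSet_lt measurable_const (hfx _)),
          Set.inter_subset_left.trans h2, (hzf 𝒜 A hA).2⟩⟩
  let start : {𝒜 : Finset (Set Ω) // good 𝒜} := ⟨{E}, by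
    intro A hA
    rw [Finset.mem_singleton] at hA
    subst hA
    exact ⟨hEm, le_rfl, hE0⟩⟩
  let st : ℕ → {𝒜 : Finset (Set Ω) // good 𝒜} := fun n => next^[n] start
  have hst : ∀ n, st (n + 1) = next (st n) := fun n => Function.iterate_succ_apply' next n start
  have hpat : ∀ (s : ℕ → Bool) (n : ℕ), ∃ A ∈ (st n).1, ∀ ω ∈ A, ∀ i < n,
      (s i = false → f ω (zf (st i)) ≤ a) ∧ (s i = true → b ≤ f ω (zf (st i))) := by
    intro s n
    induction n with
    | zero => exact ⟨E, Finset.mem_singleton_self _, fun ω _ i hi => absurd hi (by omega)⟩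
    | succ n ih =>
      obtain ⟨A, hA, hAω⟩ := ih
      rw [hst]
      cases hs : s n
      · refine ⟨A ∩ {ω | f ω (zf (st n)) < a}, Finset.mem_union_left _
          (Finset.mem_image_of_mem (fun A => A ∩ {ω | f ω (zf (st n)) < a}) hA), ?_⟩
        rintro ω ⟨hω, hω2⟩ i hi
        rcases Nat.lt_succ_iff_lt_or_eq.1 hi with h | h
        · exact hAω ω hω i h
        · subst h
          refine ⟨fun _ => le_of_lt hω2, fun h' => ?_⟩
          rw [hs] at h'
          exact absurd h' (by decide)
      · refine ⟨A ∩ {ω | b < f ω (zf (st n))}, Finset.mem_union_right _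
          (Finset.mem_image_of_mem (fun A => A ∩ {ω | b < f ω (zf (st n))}) hA), ?_⟩
        rintro ω ⟨hω, hω2⟩ i hi
        rcases Nat.lt_succ_iff_lt_or_eq.1 hi with h | h
        · exact hAω ω hω i h
        · subst h
          refine ⟨fun h' => ?_, fun _ => le_of_lt hω2⟩
          rw [hs] at h'
          exact absurd h' (by decide)
  refine no_independent hD (fun n => zf (st n)) (‖η‖ + 1) (fun n => hQb _ (hzfQ _)) M a b hab ?_
  intro s n
  obtain ⟨A, hA, hAω⟩ := hpat s n
  obtain ⟨h1, h2, h3⟩ := (st n).2 A hA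
  obtain ⟨ω, hωA, hωB⟩ := hHB A h1 (h2.trans hEH) h3
  exact ⟨f ω, hB ω hωB, hAω ω hωA⟩

/-- Pettis integrability on the measurable hull of `{‖f‖ ≤ M}`. -/
lemma bounded_part {Ω X : Type*} [MeasurableSpace Ω] [NormedAddCommGroup X] [NormedSpace ℝ X]
    (hD : HasPropertyD (X →L[ℝ] ℝ)) (ν : Measure Ω) [IsFiniteMeasure ν]
    (f : Ω → (X →L[ℝ] ℝ)) (hf : ∀ η : (X →L[ℝ] ℝ) →L[ℝ] ℝ, Measurable (fun ω => η (f ω)))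
    (M : ℝ) (hM : 0 ≤ M) (H : Set Ω) (hHdef : H = toMeasurable ν {ω | ‖f ω‖ ≤ M}) :
    (∀ η : (X →L[ℝ] ℝ) →L[ℝ] ℝ, IntegrableOn (fun ω => η (f ω)) H ν) ∧
    ∀ A, MeasurableSet A → A ⊆ H → ∃ y : X →L[ℝ] ℝ, ∀ η : (X →L[ℝ] ℝ) →L[ℝ] ℝ,
      η y = ∫ ω in A, η (f ω) ∂ν := by
  classical
  set B : Set Ω := {ω | ‖f ω‖ ≤ M} with hB
  have hH : MeasurableSet H := hHdef ▸ measurableSet_toMeasurable _ _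
  have hHS : ∀ S, MeasurableSet S → ν (H ∩ S) = ν (B ∩ S) := fun S hS => by
    rw [hHdef]
    exact Measure.measure_toMeasurable_inter hS (measure_ne_top _ _)
  have hHB : ∀ A, MeasurableSet A → A ⊆ H → ν A ≠ 0 → (A ∩ B).Nonempty := by
    intro A hA hAH h0
    have := hHS A hA
    rw [Set.inter_eq_right.2 hAH] at this
    rw [Set.inter_comm]
    exact nonempty_of_measure_ne_zero (this ▸ h0)
  have hbound : ∀ η : (X →L[ℝ] ℝ) →L[ℝ] ℝ, ∀ᵐ ω ∂(ν.restrict H), ‖η (f ω)‖ ≤ ‖η‖ * M := by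
    intro η
    rw [ae_restrict_iff' hH]
    have hSm : MeasurableSet {ω | ‖η‖ * M < ‖η (f ω)‖} :=
      measurableSet_lt measurable_const (hf η).norm
    have h0 : ν (H ∩ {ω | ‖η‖ * M < ‖η (f ω)‖}) = 0 := by
      rw [hHS _ hSm]
      have : B ∩ {ω | ‖η‖ * M < ‖η (f ω)‖} = ∅ := by
        ext ω
        simp only [Set.mem_inter_iff, Set.mem_empty_iff_false, iff_false, not_and]
        intro h1 h2
        have h3 : ‖η (f ω)‖ ≤ ‖η‖ * M :=
          (η.le_opNorm _).trans (mul_le_mul_of_nonneg_left h1 (norm_nonneg _))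
        exact absurd h2 (not_lt.2 h3)
      rw [this, measure_empty]
    filter_upwards [measure_eq_zero_iff_ae_notMem.1 h0] with ω hω hωH
    by_contra hlt
    exact hω ⟨hωH, not_le.1 hlt⟩
  have hintg : ∀ η : (X →L[ℝ] ℝ) →L[ℝ] ℝ, IntegrableOn (fun ω => η (f ω)) H ν := fun η =>
    Integrable.of_bound (hf η).aestronglyMeasurable _ (hbound η)
  refine ⟨hintg, ?_⟩
  have hGi : ∀ x : X, IntegrableOn (fun ω => f ω x) H ν := fun x =>
    hintg (ContinuousLinearMap.apply ℝ ℝ x)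
  have hxb : ∀ x : X, ∀ᵐ ω ∂(ν.restrict H), ‖f ω x‖ ≤ ‖x‖ * M := by
    intro x
    filter_upwards [hbound (ContinuousLinearMap.apply ℝ ℝ x)] with ω hω
    refine le_trans hω (mul_le_mul_of_nonneg_right ?_ hM)
    refine ContinuousLinearMap.opNorm_le_bound _ (norm_nonneg _) fun y => ?_
    rw [mul_comm]
    exact y.le_opNorm x
  -- Gelfand integral
  have hGex : ∀ A : Set Ω, ∃ y : X →L[ℝ] ℝ, MeasurableSet A →
      ∀ x, y x = ∫ ω in A ∩ H, f ω x ∂ν := by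
    intro A
    have hi : ∀ x, IntegrableOn (fun ω => f ω x) (A ∩ H) ν := fun x =>
      (hGi x).mono_set Set.inter_subset_right
    let l : X →ₗ[ℝ] ℝ :=
      { toFun := fun x => ∫ ω in A ∩ H, f ω x ∂ν
        map_add' := fun x y => by
          simp only [map_add]
          exact integral_add (hi x) (hi y)
        map_smul' := fun c x => by
          simp only [map_smul, smul_eq_mul, RingHom.id_apply]
          exact integral_const_mul c _ }
    refine ⟨l.mkContinuous (M * ν.real (A ∩ H)) fun x => ?_, fun _ x => rfl⟩
    have hb : ∀ᵐ ω ∂(ν.restrict (A ∩ H)), ‖f ω x‖ ≤ ‖x‖ * M :=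
      ae_mono (Measure.restrict_mono Set.inter_subset_right le_rfl) (hxb x)
    have := norm_integral_le_of_norm_le_const hb
    rw [measureReal_restrict_apply_univ] at this
    calc ‖l x‖ ≤ ‖x‖ * M * ν.real (A ∩ H) := this
      _ = M * ν.real (A ∩ H) * ‖x‖ := by ring
  choose G hG using hGex
  have hGsub : ∀ A, MeasurableSet A → A ⊆ H → ∀ x : X, G A x = ∫ ω in A, f ω x ∂ν := by
    intro A hA hAH x
    rw [hG A hA, Set.inter_eq_left.2 hAH]
  intro A hA hAH
  refine ⟨G A, fun η => ?_⟩
  obtain ⟨g, hgm, hgi, hg⟩ := exists_density hD ν total_range_inclusion (H.indicator f)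
    (by
      rintro _ ⟨x, rfl⟩
      have : (fun ω => (ContinuousLinearMap.apply ℝ ℝ x) (H.indicator f ω))
          = H.indicator (fun ω => f ω x) := by
        funext ω
        by_cases h : ω ∈ H <;> simp [h]
      rw [this]
      exact (hGi x).integrable_indicator hH) G
    (by
      rintro A hA _ ⟨x, rfl⟩
      have : (fun ω => (ContinuousLinearMap.apply ℝ ℝ x) (H.indicator f ω))
          = H.indicator (fun ω => f ω x) := by
        funext ω
        by_cases h : ω ∈ H <;> simp [h]
      rw [this, setIntegral_indicator hH]
      exact hG A hA x) η
  have hη : ∀ A, MeasurableSet A → A ⊆ H → η (G A) = ∫ ω in A, g ω ∂ν := fun A hA _ => hg A hA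
  have hgap1 := fun a b (hab : a < b) => gap_null hD ν f hf H B M hH (fun ω hω => hω) hHB G hGi
    hGsub η g hgm hgi hη a b hab
  have hgap2 := fun a b (hab : a < b) => gap_null hD ν f hf H B M hH (fun ω hω => hω) hHB G hGi
    hGsub (-η) (fun ω => - g ω) hgm.neg hgi.neg (by
      intro A hA hAH
      rw [neg_apply, hη A hA hAH, integral_neg]) a b hab
  have hae : ∀ᵐ ω ∂ν, ω ∈ H → g ω = η (f ω) := by
    have h1 : ∀ᵐ ω ∂ν, ∀ q r : ℚ, q < r → ¬ (ω ∈ H ∧ η (f ω) < q ∧ (r : ℝ) < g ω) := by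
      rw [ae_all_iff]; intro q
      rw [ae_all_iff]; intro r
      by_cases hqr : q < r
      · filter_upwards [measure_eq_zero_iff_ae_notMem.1
          (hgap1 q r (by exact_mod_cast hqr))] with ω hω _
        exact hω
      · exact ae_of_all _ fun ω h => absurd h hqr
    have h2 : ∀ᵐ ω ∂ν, ∀ q r : ℚ, q < r → ¬ (ω ∈ H ∧ (-η) (f ω) < q ∧ (r : ℝ) < - g ω) := by
      rw [ae_all_iff]; intro q
      rw [ae_all_iff]; intro r
      by_cases hqr : q < r
      · filter_upwards [measure_eq_zero_iff_ae_notMem.1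
          (hgap2 q r (by exact_mod_cast hqr))] with ω hω _
        exact hω
      · exact ae_of_all _ fun ω h => absurd h hqr
    filter_upwards [h1, h2] with ω h1 h2 hωH
    apply le_antisymm
    · by_contra hlt
      rw [not_le] at hlt
      obtain ⟨q, hq1, hq2⟩ := exists_rat_btwn hlt
      obtain ⟨r, hr1, hr2⟩ := exists_rat_btwn hq2
      exact h1 q r (by exact_mod_cast hr1) ⟨hωH, hq1, hr2⟩
    · by_contra hlt
      rw [not_le] at hlt
      obtain ⟨q, hq1, hq2⟩ := exists_rat_btwn (neg_lt_neg hlt)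
      obtain ⟨r, hr1, hr2⟩ := exists_rat_btwn hq2
      exact h2 q r (by exact_mod_cast hr1) ⟨hωH, hq1, hr2⟩
  rw [hη A hA hAH]
  refine setIntegral_congr_ae hA ?_
  filter_upwards [hae] with ω hω hωA
  exact hω (hAH hωA)

/-- If the dual `X*` has property (D), then for every total linear subspace
`Γ̃ ⊆ X**` every `Γ̃`-integrable function `f : Ω → X*` is Pettis integrable. -/
theorem pettis_of_gammaTilde_integrable_dual
    {Ω X : Type*} [MeasurableSpace Ω] [NormedAddCommGroup X] [NormedSpace ℝ X]
    [CompleteSpace X]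
    (ν : Measure Ω) [IsProbabilityMeasure ν] [ν.IsComplete]
    (hD : HasPropertyD (X →L[ℝ] ℝ))
    (Γ' : Submodule ℝ ((X →L[ℝ] ℝ) →L[ℝ] ℝ))
    (htotal : ∀ ψ : X →L[ℝ] ℝ, ψ ≠ 0 → ∃ ξ ∈ Γ', ξ ψ ≠ 0)
    (f : Ω → (X →L[ℝ] ℝ))
    (hscal : ∀ ξ ∈ Γ', Integrable (fun ω => ξ (f ω)) ν)
    (hint : ∀ A : Set Ω, MeasurableSet A →
      ∃ m : X →L[ℝ] ℝ, ∀ ξ ∈ Γ', ξ m = ∫ ω in A, ξ (f ω) ∂ν) :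
    PettisIntegrable ν f := by
  have htot : IsTotalSet (X →L[ℝ] ℝ) (Γ' : Set ((X →L[ℝ] ℝ) →L[ℝ] ℝ)) := htotal
  have hfΓ : Measurable[_, sigmaGen (X →L[ℝ] ℝ) (Γ' : Set ((X →L[ℝ] ℝ) →L[ℝ] ℝ))] f :=
    measurable_sigmaGen fun ξ hξ =>
      (hscal ξ hξ).aestronglyMeasurable.aemeasurable.nullMeasurable.measurable_of_complete
  rw [hD _ htot] at hfΓ
  have hf : ∀ η : (X →L[ℝ] ℝ) →L[ℝ] ℝ, Measurable (fun ω => η (f ω)) := fun η =>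
    (measurable_of_mem_sigmaGen (Set.mem_univ η)).comp hfΓ
  choose! m hm using hint
  have key : ∀ η : (X →L[ℝ] ℝ) →L[ℝ] ℝ, Integrable (fun ω => η (f ω)) ν ∧
      ∀ A, MeasurableSet A → η (m A) = ∫ ω in A, η (f ω) ∂ν := by
    intro η
    obtain ⟨g, hgm, hgi, hg⟩ := exists_density hD ν htot f hscal m hm η
    have hloc : ∀ n : ℕ, ∀ᵐ ω ∂ν, ‖f ω‖ ≤ n → g ω = η (f ω) := by
      intro n
      set H := toMeasurable ν {ω | ‖f ω‖ ≤ (n : ℝ)} with hH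
      have hHm : MeasurableSet H := measurableSet_toMeasurable _ _
      obtain ⟨hi, hp⟩ := bounded_part hD ν f hf n (Nat.cast_nonneg n) H hH
      have hae : g =ᵐ[ν.restrict H] fun ω => η (f ω) := by
        refine Integrable.ae_eq_of_forall_setIntegral_eq _ _ hgi.integrableOn (hi η) ?_
        intro A hA _
        rw [Measure.restrict_restrict hA]
        obtain ⟨y, hy⟩ := hp (A ∩ H) (hA.inter hHm) Set.inter_subset_right
        have hym : y = m (A ∩ H) := by
          refine htot.eq_of_forall fun ξ hξ => ?_
          rw [hy ξ, hm _ (hA.inter hHm) ξ hξ]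
        rw [← hg _ (hA.inter hHm), ← hym, hy η]
      rw [Filter.EventuallyEq, ae_restrict_iff' hHm] at hae
      filter_upwards [hae] with ω hω hn
      exact hω (subset_toMeasurable _ _ hn)
    have hall : g =ᵐ[ν] fun ω => η (f ω) := by
      filter_upwards [ae_all_iff.2 hloc] with ω hω
      obtain ⟨n, hn⟩ := exists_nat_ge ‖f ω‖
      exact hω n hn
    refine ⟨hgi.congr hall, fun A hA => ?_⟩
    rw [hg A hA]
    exact integral_congr_ae (ae_restrict_of_ae hall)
  exact ⟨fun η => (key η).1, fun A hA => ⟨m A, fun η => (key η).2 A hA⟩⟩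
end

section
/- Let (Ω,Σ,ν) be a complete probability space, X a real Banach space, Γ ⊆ X* a total linear subspace, f : Ω → X a Γ-scalarly integrable function, and D ⊆ Γ a set such that Z_{f,D} = {x* ∘ f : x* ∈ D} is uniformly integrable in L¹(ν). Let S ⊆ X* be the smallest w*-sequentially closed subset of X* containing D (i.e., the intersection of all w*-sequentially closed subsets of X* containing D). Then for every x* ∈ S the function x* ∘ f is ν-integrable, and the family Z_{f,S} = {x* ∘ f : x* ∈ S} is uniformly integrable in L¹(ν). -/
open MeasureTheory Filter Topology

/-- A set `C ⊆ X*` is `w*`-sequentially closed: it contains the limits of all its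
`w*`-convergent sequences. -/
def WStarSeqClosed {X : Type*} [NormedAddCommGroup X] [NormedSpace ℝ X]
    (C : Set (X →L[ℝ] ℝ)) : Prop :=
  ∀ (φ : ℕ → X →L[ℝ] ℝ) (ψ : X →L[ℝ] ℝ), (∀ n, φ n ∈ C) →
    (∀ x : X, Tendsto (fun n => φ n x) atTop (𝓝 (ψ x))) → ψ ∈ C

theorem fatou_aux {Ω : Type*} [MeasurableSpace Ω] (μ : Measure Ω) (g : ℕ → Ω → ℝ) (h : Ω → ℝ)
    (c : ℝ) (hg : ∀ n, Integrable (g n) μ) (hc : ∀ n, ∫ ω, |g n ω| ∂μ ≤ c)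
    (hlim : ∀ ω, Tendsto (fun n => g n ω) atTop (𝓝 (h ω))) :
    Integrable h μ ∧ ∫ ω, |h ω| ∂μ ≤ c := by
  have hm : AEStronglyMeasurable h μ :=
    aestronglyMeasurable_of_tendsto_ae atTop (fun n => (hg n).1) (Eventually.of_forall hlim)
  have hc0 : 0 ≤ c := le_trans (integral_nonneg fun ω => abs_nonneg _) (hc 0)
  have hb : ∀ n, ∫⁻ ω, ‖g n ω‖ₑ ∂μ ≤ ENNReal.ofReal c := by
    intro n
    rw [← ofReal_integral_norm_eq_lintegral_enorm (hg n)]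
    exact ENNReal.ofReal_le_ofReal (hc n)
  have key : ∫⁻ ω, ‖h ω‖ₑ ∂μ ≤ ENNReal.ofReal c := by
    calc ∫⁻ ω, ‖h ω‖ₑ ∂μ = ∫⁻ ω, liminf (fun n => ‖g n ω‖ₑ) atTop ∂μ := by
          refine lintegral_congr fun ω => ?_
          exact ((hlim ω).enorm).liminf_eq.symm
      _ ≤ liminf (fun n => ∫⁻ ω, ‖g n ω‖ₑ ∂μ) atTop :=
          lintegral_liminf_le' fun n => (hg n).1.enorm
      _ ≤ liminf (fun _ : ℕ => ENNReal.ofReal c) atTop :=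
          liminf_le_liminf (Eventually.of_forall hb)
      _ = ENNReal.ofReal c := liminf_const _
  have hi : Integrable h μ := ⟨hm, lt_of_le_of_lt key ENNReal.ofReal_lt_top⟩
  refine ⟨hi, ?_⟩
  rw [← ofReal_integral_norm_eq_lintegral_enorm hi] at key
  exact (ENNReal.ofReal_le_ofReal_iff hc0).1 key

/-- If `Z_{f,D}` is uniformly integrable and `S` is the smallest `w*`-sequentially
closed subset of `X*` containing `D`, then every `x* ∘ f` with `x* ∈ S` is integrable
and `Z_{f,S}` is uniformly integrable. -/
theorem unifIntegrable_seq_closure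
    {Ω X : Type*} [MeasurableSpace Ω] [NormedAddCommGroup X] [NormedSpace ℝ X]
    [CompleteSpace X]
    (ν : Measure Ω) [IsProbabilityMeasure ν] [ν.IsComplete]
    (Γ : Submodule ℝ (X →L[ℝ] ℝ))
    (htotal : ∀ x : X, x ≠ 0 → ∃ φ ∈ Γ, φ x ≠ 0)
    (f : Ω → X)
    (hscal : ∀ φ ∈ Γ, Integrable (fun ω => φ (f ω)) ν)
    (D : Set (X →L[ℝ] ℝ)) (hD : D ⊆ Γ)
    (hui : UnifIntegrableFam ν {g | ∃ φ ∈ D, g = fun ω => φ (f ω)})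
    (S : Set (X →L[ℝ] ℝ))
    (hS : S = ⋂₀ {C : Set (X →L[ℝ] ℝ) | D ⊆ C ∧ WStarSeqClosed C}) :
    (∀ φ ∈ S, Integrable (fun ω => φ (f ω)) ν) ∧
    UnifIntegrableFam ν {g | ∃ φ ∈ S, g = fun ω => φ (f ω)} := by
  obtain ⟨⟨C, hC⟩, hδ⟩ := hui
  choose! δ hδ0 hδ using hδ
  have key : S ⊆ {φ | Integrable (fun ω => φ (f ω)) ν ∧ ∫ ω, |φ (f ω)| ∂ν ≤ C ∧
      ∀ ε : ℝ, 0 < ε → ∀ A : Set Ω, MeasurableSet A → ν A ≤ ENNReal.ofReal (δ ε) →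
        ∫ ω in A, |φ (f ω)| ∂ν ≤ ε} := by
    rw [hS]
    refine Set.sInter_subset_of_mem ⟨?_, ?_⟩
    · intro φ hφ
      exact ⟨hscal φ (hD hφ), hC _ ⟨φ, hφ, rfl⟩,
        fun ε hε A hA hA' => hδ ε hε _ ⟨φ, hφ, rfl⟩ A hA hA'⟩
    · intro φ ψ hφ hlim
      have h1 := fatou_aux ν (fun n ω => φ n (f ω)) (fun ω => ψ (f ω)) C
        (fun n => (hφ n).1) (fun n => (hφ n).2.1) (fun ω => hlim (f ω))
      refine ⟨h1.1, h1.2, fun ε hε A hA hA' => ?_⟩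
      exact (fatou_aux (ν.restrict A) (fun n ω => φ n (f ω)) (fun ω => ψ (f ω)) ε
        (fun n => (hφ n).1.restrict) (fun n => (hφ n).2.2 ε hε A hA hA')
        (fun ω => hlim (f ω))).2
  refine ⟨fun φ hφ => (key hφ).1, ⟨C, ?_⟩, fun ε hε => ⟨δ ε, hδ0 ε hε, ?_⟩⟩
  · rintro _ ⟨φ, hφ, rfl⟩
    exact (key hφ).2.1
  · rintro _ ⟨φ, hφ, rfl⟩
    exact (key hφ).2.2 ε hε
end
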